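/- Let X be a connected tiled surface which is a proper surface, meaning every edge is incident with one or two 4g-gons and every vertex is incident with a single sequence of m 4g-gons with 1 ≤ m ≤ 4g. Suppose X has genus h and a total of b boundary components and punctures. If h ≥ 1 or b ≥ 3, then X^(1) contains a cycle, not contained in ∂X, which is cyclically shortest among the cycles representing its free homotopy class in X. -/

import Mathlib

/-!
Formalization preamble for "Core Surfaces" (Magee–Puder).

We work with a fixed combinatorial (CW) model.  The surface `Σ_g` has one vertex,
`2g` directed labeled edges (the label `2i` plays the role of `a_{i+1}` and `2i+1`
the role of `b_{i+1}`), and one `4g`-gon glued along `[a₁,b₁]⋯[a_g,b_g]`.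

* `Gamma g` is the surface group, presented by the single relator.
* A `Complex g` is a combinatorial 2-complex with directed, labeled edges and
  2-cells given by their boundary walks; coverings of `Σ_g` are the complexes in
  which every vertex has exactly one incoming/outgoing edge of each label, every
  walk reading the relator is closed, and every closed walk reading the relator
  bounds exactly one face (`IsCovering`).  A tiled surface is a complex that
  embeds into such a covering (`IsTiledSurface`).
* Blocks, chains, boundary cycles (via the ribbon structure coming from the fixed
  cyclic order of the `4g` half-edges around a vertex of `Σ_g`), boundary-reduced
  and strongly boundary-reduced surfaces are defined combinatorially.
* Homotopy of edge-walks is the edge-path-group homotopy: backtrack insertions and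
  insertions of boundaries of (present) faces.
* `cover g J` is the covering space `J\~Σ_g` of `Σ_g` associated to a subgroup
  `J ≤ Γ_g` (vertices = right cosets), and `coreSub g J` is the core surface of
  `J`, defined exactly as in the paper: the union of all shortest representative
  cycles of essential free-homotopy classes, together with all components of the
  complement containing finitely many `4g`-gons.
-/

noncomputable section

namespace CS

/-- Signed letters over the generators `a₁,b₁,…,a_g,b_g` of `Γ_g`
(`a_{i+1} ↦ 2i`, `b_{i+1} ↦ 2i+1`); `true` means a positive letter. -/
abbrev Letter (g : ℕ) := Fin (2 * g) × Bool

/-- The label of the `p`-th letter of the relator `[a₁,b₁][a₂,b₂]⋯[a_g,b_g]`. -/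
def relLabel (g : ℕ) (p : Fin (4 * g)) : Fin (2 * g) :=
  ⟨2 * ((p : ℕ) / 4) + ((p : ℕ) % 4) % 2, by have := p.2; omega⟩

/-- The sign of the `p`-th letter of the relator. -/
def relSign (g : ℕ) (p : Fin (4 * g)) : Bool := decide ((p : ℕ) % 4 < 2)

/-- The relator `[a₁,b₁][a₂,b₂]⋯[a_g,b_g]` as a word (list of signed letters). -/
def relatorWord (g : ℕ) : List (Letter g) :=
  (List.finRange (4 * g)).map fun p => (relLabel g p, relSign g p)

/-- The relator as an element of the free group on the `2g` generators. -/
def relatorF (g : ℕ) : FreeGroup (Fin (2 * g)) :=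
  ((relatorWord g).map fun l => if l.2 then FreeGroup.of l.1 else (FreeGroup.of l.1)⁻¹).prod

/-- The surface group `Γ_g = ⟨a₁,b₁,…,a_g,b_g ∣ [a₁,b₁]⋯[a_g,b_g]⟩`. -/
abbrev Gamma (g : ℕ) := PresentedGroup ({relatorF g} : Set (FreeGroup (Fin (2 * g))))

/-- The image of a signed letter in `Γ_g`. -/
def letterG {g : ℕ} (l : Letter g) : Gamma g :=
  if l.2 then PresentedGroup.of l.1 else (PresentedGroup.of l.1)⁻¹

/-- The image of a word in `Γ_g`. -/
def wordG {g : ℕ} (w : List (Letter g)) : Gamma g := (w.map letterG).prod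

/-- `ℓ(γ^{Γ_g})`: the minimal length of a word in the generators representing the
conjugacy class of `γ` in `Γ_g`. -/
def conjLen {g : ℕ} (γ : Gamma g) : ℕ :=
  sInf {n | ∃ w : List (Letter g), w.length = n ∧ ∃ x : Gamma g, x * wordG w * x⁻¹ = γ}

/-! ### Half-edge positions around a vertex of `Σ_g`

The `4g` half-edges around the vertex `o` of `Σ_g` come in the (clockwise) cyclic
order `a₁`-out, `b₁`-in, `a₁`-in, `b₁`-out, `a₂`-out, `b₂`-in, `a₂`-in, `b₂`-out, …
-/

/-- Position of the outgoing `ℓ`-labeled half-edge in the cyclic order. -/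
def posOut {g : ℕ} (ℓ : Fin (2 * g)) : ℕ :=
  if (ℓ : ℕ) % 2 = 0 then 2 * (ℓ : ℕ) else 2 * (ℓ : ℕ) + 1

/-- Position of the incoming `ℓ`-labeled half-edge in the cyclic order. -/
def posIn {g : ℕ} (ℓ : Fin (2 * g)) : ℕ :=
  if (ℓ : ℕ) % 2 = 0 then 2 * (ℓ : ℕ) + 2 else 2 * (ℓ : ℕ) - 1

/-- The position of the half-edge through which a traversal of a dart with signed
letter `s` *arrives* at its terminal vertex. -/
def posArr {g : ℕ} (s : Letter g) : ℕ := if s.2 then posIn s.1 else posOut s.1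

/-- The position of the half-edge through which a traversal of a dart with signed
letter `s` *leaves* its initial vertex. -/
def posLv {g : ℕ} (s : Letter g) : ℕ := if s.2 then posOut s.1 else posIn s.1

/-- The number of half-edges strictly between the arrival half-edge of `s` and the
departure half-edge of `t`, in the clockwise cyclic order of the `4g` half-edges
around a vertex. -/
def gapN {g : ℕ} (s t : Letter g) : ℕ := (posLv t + 4 * g - (posArr s + 1)) % (4 * g)

/-! ### Combinatorial complexes -/

/-- A combinatorial at-most-2-dimensional CW-complex with directed edges labeled by
the generators of `Γ_g`, and 2-cells recorded by their boundary walks (lists of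
darts, i.e. edges with a direction of traversal). -/
structure Complex (g : ℕ) where
  V : Type
  E : Type
  F : Type
  src : E → V
  dst : E → V
  lab : E → Fin (2 * g)
  bdry : F → List (E × Bool)

namespace Complex

variable {g : ℕ} (Y : Complex g)

/-- Darts: edges together with a direction of traversal (`true` = forward). -/
abbrev D := Y.E × Bool

/-- The initial vertex of a dart. -/
def dTail (d : Y.D) : Y.V := if d.2 then Y.src d.1 else Y.dst d.1

/-- The terminal vertex of a dart. -/
def dHead (d : Y.D) : Y.V := if d.2 then Y.dst d.1 else Y.src d.1

/-- The reversal of a dart. -/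
def dRev (d : Y.D) : Y.D := (d.1, !d.2)

/-- The signed letter read by a dart. -/
def dLet (d : Y.D) : Letter g := (Y.lab d.1, d.2)

/-- The word read along a list of darts. -/
def wordOf (l : List Y.D) : List (Letter g) := l.map Y.dLet

/-- The reversed walk. -/
def revW (l : List Y.D) : List Y.D := (l.map Y.dRev).reverse

/-- `WalkFrom u v l` : `l` is a walk (edge-path) from `u` to `v`. -/
inductive WalkFrom : Y.V → Y.V → List Y.D → Prop
  | nil (v : Y.V) : WalkFrom v v []
  | cons (d : Y.D) {v : Y.V} {l : List Y.D} :
      WalkFrom (Y.dHead d) v l → WalkFrom (Y.dTail d) v (d :: l)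

/-- All darts of `l` use edges from the set `sE`. -/
def InSet (sE : Set Y.E) (l : List Y.D) : Prop := ∀ d ∈ l, d.1 ∈ sE

/-- Two darts are adjacent (can be traversed consecutively). -/
def adj (d d' : Y.D) : Prop := Y.dHead d = Y.dTail d'

/-- A nonempty closed walk. -/
def IsCycle (c : List Y.D) : Prop := c ≠ [] ∧ ∃ v, Y.WalkFrom v v c

/-- **P1**: at most one incoming and at most one outgoing `ℓ`-labeled edge at every
vertex, for every label `ℓ`. -/
def P1 : Prop :=
  (∀ e e' : Y.E, Y.src e = Y.src e' → Y.lab e = Y.lab e' → e = e') ∧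
  (∀ e e' : Y.E, Y.dst e = Y.dst e' → Y.lab e = Y.lab e' → e = e')

/-- **P2**: every walk reading a word equal to `1` in `Γ_g` is closed. -/
def P2 : Prop :=
  ∀ (u v : Y.V) (l : List Y.D), Y.WalkFrom u v l → wordG (Y.wordOf l) = 1 → u = v

/-- **P3**: every 2-cell is glued along a closed walk reading the relator
`[a₁,b₁]⋯[a_g,b_g]`, and every such closed walk bounds at most one 2-cell. -/
def P3 : Prop :=
  (∀ f : Y.F, (∃ v, Y.WalkFrom v v (Y.bdry f)) ∧ Y.wordOf (Y.bdry f) = relatorWord g) ∧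
  Function.Injective Y.bdry

/-- A combinatorial covering space of `Σ_g`: every vertex has exactly one outgoing
and one incoming edge of each label, every walk reading the relator is closed, and
every closed walk reading the relator bounds exactly one `4g`-gon. -/
def IsCovering : Prop :=
  Y.P1 ∧ Y.P3 ∧
  (∀ (v : Y.V) (ℓ : Fin (2 * g)), ∃ e, Y.src e = v ∧ Y.lab e = ℓ) ∧
  (∀ (v : Y.V) (ℓ : Fin (2 * g)), ∃ e, Y.dst e = v ∧ Y.lab e = ℓ) ∧
  (∀ (u v : Y.V) (l : List Y.D), Y.WalkFrom u v l → Y.wordOf l = relatorWord g → u = v) ∧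
  (∀ (v : Y.V) (l : List Y.D), Y.WalkFrom v v l → Y.wordOf l = relatorWord g →
    ∃ f, Y.bdry f = l)

end Complex

/-- A morphism of labeled complexes: maps cells to cells of the same dimension and
respects sources, targets, labels and face boundaries (equivalently, commutes with
the immersions to `Σ_g`). -/
structure Hom {g : ℕ} (Y Z : Complex g) where
  mV : Y.V → Z.V
  mE : Y.E → Z.E
  mF : Y.F → Z.F
  hsrc : ∀ e, Z.src (mE e) = mV (Y.src e)
  hdst : ∀ e, Z.dst (mE e) = mV (Y.dst e)
  hlab : ∀ e, Z.lab (mE e) = Y.lab e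
  hbdry : ∀ f, Z.bdry (mF f) = (Y.bdry f).map fun d => (mE d.1, d.2)

namespace Hom

variable {g : ℕ} {Y Z : Complex g}

/-- The induced map on darts. -/
def mD (φ : Hom Y Z) (d : Y.D) : Z.D := (φ.mE d.1, d.2)

/-- Injectivity (an embedding of complexes). -/
def Inj (φ : Hom Y Z) : Prop :=
  Function.Injective φ.mV ∧ Function.Injective φ.mE ∧ Function.Injective φ.mF

end Hom

namespace Complex

variable {g : ℕ} (Y : Complex g)

/-- A tiled surface: a complex which embeds into a combinatorial covering space of
`Σ_g` (compatibly with directions and labels). -/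
def IsTiledSurface : Prop :=
  ∃ Z : Complex g, Z.IsCovering ∧ ∃ φ : Hom Y Z, φ.Inj

/-- Connectivity of a complex (any two vertices are joined by a walk). -/
def Connected : Prop := Nonempty Y.V ∧ ∀ v w : Y.V, ∃ l, Y.WalkFrom v w l

/-! ### Blocks and chains -/

/-- A block: a nonempty walk such that successive darts have no half-edges between
them (hence it reads a subword of the cyclic relator, of length at most `4g`). -/
def IsBlock (l : List Y.D) : Prop :=
  l ≠ [] ∧ l.length ≤ 4 * g ∧
  List.Chain' (fun d d' => Y.adj d d' ∧ gapN (Y.dLet d) (Y.dLet d') = 0) l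

/-- Two blocks are consecutive: concatenation is a walk and there is exactly one
half-edge between the last dart of the first and the first dart of the second. -/
def chainStep (b b' : List Y.D) : Prop :=
  ∃ d d', b.getLast? = some d ∧ b'.head? = some d' ∧ Y.adj d d' ∧
    gapN (Y.dLet d) (Y.dLet d') = 1

/-- A chain: a nonempty sequence of consecutive blocks. -/
def IsChain (bs : List (List Y.D)) : Prop :=
  bs ≠ [] ∧ (∀ b ∈ bs, Y.IsBlock b) ∧ List.Chain' Y.chainStep bs

/-- A cyclic chain: a chain whose blocks pave an entire cycle. -/
def IsCyclicChain (bs : List (List Y.D)) : Prop :=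
  Y.IsChain bs ∧ ∃ b b', bs.getLast? = some b ∧ bs.head? = some b' ∧ Y.chainStep b b'

/-- A long chain: a chain of consecutive blocks of lengths `2g, 2g−1, …, 2g−1, 2g`. -/
def IsLongChain (bs : List (List Y.D)) : Prop :=
  Y.IsChain bs ∧ ∃ k, bs.map List.length = 2 * g :: (List.replicate k (2 * g - 1) ++ [2 * g])

/-- A half-chain: a cyclic chain all of whose blocks have length `2g − 1`. -/
def IsHalfChain (bs : List (List Y.D)) : Prop :=
  Y.IsCyclicChain bs ∧ ∀ b ∈ bs, b.length = 2 * g - 1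

/-! ### Boundary cycles of the thick version (relative to sets of present edges and
faces), via the ribbon structure -/

/-- `nextD sE d d'`: among darts (with edge in `sE`) leaving the head of `d`, the
dart `d'` is the first one in clockwise order after the arrival half-edge of `d`.
This is the successor map whose orbits trace the boundary components of the thick
version of the ribbon graph. -/
def nextD (sE : Set Y.E) (d d' : Y.D) : Prop :=
  d'.1 ∈ sE ∧ Y.adj d d' ∧
  ∀ d'' : Y.D, d''.1 ∈ sE → Y.adj d d'' →
    gapN (Y.dLet d) (Y.dLet d') ≤ gapN (Y.dLet d) (Y.dLet d'')

/-- The corner between the consecutive darts `d, d'` is filled by a face from `sF`. -/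
def faceStep (sF : Set Y.F) (d d' : Y.D) : Prop :=
  ∃ f ∈ sF, [d, d'] <:+: (Y.bdry f ++ Y.bdry f)

/-- One step along the boundary of the thick version. -/
def bStep (sE : Set Y.E) (sF : Set Y.F) (d d' : Y.D) : Prop :=
  d.1 ∈ sE ∧ Y.nextD sE d d' ∧ ¬ Y.faceStep sF d d'

/-- A (finite segment of a) boundary cycle of the thick version. -/
def BPath (sE : Set Y.E) (sF : Set Y.F) (l : List Y.D) : Prop :=
  l ≠ [] ∧ Y.InSet sE l ∧ List.Chain' (Y.bStep sE sF) l

/-- A (finite) boundary cycle of the thick version. -/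
def BCycle (sE : Set Y.E) (sF : Set Y.F) (l : List Y.D) : Prop :=
  Y.BPath sE sF l ∧ ∃ d d', l.getLast? = some d ∧ l.head? = some d' ∧ Y.bStep sE sF d d'

/-- A dart lying on the boundary of the thick version. -/
def IsBDart (sE : Set Y.E) (sF : Set Y.F) (d : Y.D) : Prop :=
  d.1 ∈ sE ∧ ∃ d', Y.nextD sE d d' ∧ ¬ Y.faceStep sF d d'

/-- Boundary reduced: no boundary cycle contains a long block (length `≥ 2g+1`) or
a long chain. -/
def BoundaryReduced (sE : Set Y.E) (sF : Set Y.F) : Prop :=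
  (∀ l, Y.BPath sE sF l → ¬ (Y.IsBlock l ∧ 2 * g + 1 ≤ l.length)) ∧
  (∀ bs, Y.IsLongChain bs → ¬ Y.BPath sE sF bs.flatten)

/-- Strongly boundary reduced: no boundary cycle contains a half-block (length
exactly `2g`) or a half-chain. -/
def StronglyBoundaryReduced (sE : Set Y.E) (sF : Set Y.F) : Prop :=
  (∀ l, Y.BPath sE sF l → ¬ (Y.IsBlock l ∧ l.length = 2 * g)) ∧
  (∀ bs, Y.IsHalfChain bs → ¬ Y.BCycle sE sF bs.flatten)

/-! ### Combinatorial homotopy of walks -/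

/-- A closed walk traversing the boundary of a face from `sF` (in either direction,
starting anywhere). -/
def faceLoop (sF : Set Y.F) (b : List Y.D) : Prop :=
  ∃ f ∈ sF, ∃ n, b = (Y.bdry f).rotate n ∨ b = Y.revW ((Y.bdry f).rotate n)

/-- Elementary homotopy move: insertion of a backtrack or of a face boundary. -/
def elemMove (sE : Set Y.E) (sF : Set Y.F) (l l' : List Y.D) : Prop :=
  (∃ (l₁ l₂ : List Y.D) (d : Y.D), d.1 ∈ sE ∧ l = l₁ ++ l₂ ∧ l' = l₁ ++ d :: Y.dRev d :: l₂) ∨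
  (∃ l₁ l₂ b, Y.faceLoop sF b ∧ l = l₁ ++ l₂ ∧ l' = l₁ ++ b ++ l₂)

/-- Homotopy (rel endpoints) of walks from `u` to `v`, inside the subcomplex with
edge set `sE` and face set `sF`. -/
def Homotopic (sE : Set Y.E) (sF : Set Y.F) (u v : Y.V) (c c' : List Y.D) : Prop :=
  Relation.EqvGen
    (fun a b =>
      Y.WalkFrom u v a ∧ Y.WalkFrom u v b ∧ Y.InSet sE a ∧ Y.InSet sE b ∧
        (Y.elemMove sE sF a b ∨ Y.elemMove sE sF b a)) c c'

/-- A closed walk which is null-homotopic. -/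
def NullHomotopic (sE : Set Y.E) (sF : Set Y.F) (c : List Y.D) : Prop :=
  ∃ v, Y.WalkFrom v v c ∧ Y.Homotopic sE sF v v c []

/-- An essential cycle: a nonempty closed walk which is not null-homotopic. -/
def Essential (sE : Set Y.E) (sF : Set Y.F) (c : List Y.D) : Prop :=
  Y.IsCycle c ∧ Y.InSet sE c ∧ ¬ Y.NullHomotopic sE sF c

/-- Free homotopy of closed walks. -/
def FreelyHomotopic (sE : Set Y.E) (sF : Set Y.F) (c c' : List Y.D) : Prop :=
  ∃ u v q, Y.WalkFrom u u c ∧ Y.WalkFrom v v c' ∧ Y.WalkFrom u v q ∧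
    Y.InSet sE q ∧ Y.InSet sE c ∧ Y.InSet sE c' ∧
    Y.Homotopic sE sF u u c (q ++ c' ++ Y.revW q)

/-- `c` is a shortest representative of its free homotopy class. -/
def ShortestRep (sE : Set Y.E) (sF : Set Y.F) (c : List Y.D) : Prop :=
  ∀ c', Y.FreelyHomotopic sE sF c c' → c.length ≤ c'.length

end Complex

/-- `s` occurs as a contiguous subword of the cyclic word `c`. -/
def cycContains {α : Type*} (c s : List α) : Prop :=
  s ≠ [] ∧ s.length ≤ c.length ∧ s <:+: (c ++ c)

namespace Complex

variable {g : ℕ} (Y : Complex g)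

/-- The cycle `c` contains no long block and no long chain. -/
def NoLongBlockOrChainCyc (c : List Y.D) : Prop :=
  (∀ s, cycContains c s → ¬ (Y.IsBlock s ∧ 2 * g + 1 ≤ s.length)) ∧
  (∀ bs, Y.IsLongChain bs → ¬ cycContains c bs.flatten)

/-- A (cyclically) non-backtracking cycle. -/
def NonBacktrackingCyc (c : List Y.D) : Prop :=
  ¬ ∃ d : Y.D, cycContains c [d, Y.dRev d]

/-- A cycle which is essential and a shortest representative of its
free homotopy class. -/
def GoodCycle (c : List Y.D) : Prop :=
  Y.IsCycle c ∧ Y.Essential Set.univ Set.univ c ∧ Y.ShortestRep Set.univ Set.univ c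

/-! ### Cells and components of complements -/

/-- The cells of a complex. -/
def Cell := Y.V ⊕ Y.E ⊕ Y.F

def vCell (v : Y.V) : Y.Cell := Sum.inl v
def eCell (e : Y.E) : Y.Cell := Sum.inr (Sum.inl e)
def fCell (f : Y.F) : Y.Cell := Sum.inr (Sum.inr f)

/-- Basic incidence of (open) cells. -/
def inc0 : Y.Cell → Y.Cell → Prop := fun c c' =>
  match c, c' with
  | Sum.inl v, Sum.inr (Sum.inl e) => Y.src e = v ∨ Y.dst e = v
  | Sum.inl v, Sum.inr (Sum.inr f) => ∃ d ∈ Y.bdry f, Y.dTail d = v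
  | Sum.inr (Sum.inl e), Sum.inr (Sum.inr f) => ∃ b, (e, b) ∈ Y.bdry f
  | _, _ => False

/-- Symmetrized incidence of cells. -/
def incid (c c' : Y.Cell) : Prop := Y.inc0 c c' ∨ Y.inc0 c' c

end Complex

/-- A triple of subsets of the cells of a complex `Y` (a prospective subcomplex). -/
structure SubC {g : ℕ} (Y : Complex g) where
  sV : Set Y.V
  sE : Set Y.E
  sF : Set Y.F

namespace SubC

variable {g : ℕ} {Y : Complex g}

/-- `S` is an actual subcomplex: closed under taking boundaries of cells. -/
def IsSub (S : SubC Y) : Prop :=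
  (∀ e ∈ S.sE, Y.src e ∈ S.sV ∧ Y.dst e ∈ S.sV) ∧
  (∀ f ∈ S.sF, ∀ d ∈ Y.bdry f, d.1 ∈ S.sE)

/-- Containment of subcomplexes. -/
def le (S T : SubC Y) : Prop := S.sV ⊆ T.sV ∧ S.sE ⊆ T.sE ∧ S.sF ⊆ T.sF

/-- Compactness: finitely many cells. -/
def Compact (S : SubC Y) : Prop := S.sV.Finite ∧ S.sE.Finite ∧ S.sF.Finite

/-- Connectivity of the subcomplex. -/
def Connected (S : SubC Y) : Prop :=
  S.sV.Nonempty ∧ ∀ v ∈ S.sV, ∀ w ∈ S.sV, ∃ l, Y.WalkFrom v w l ∧ Y.InSet S.sE l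

/-- Image of a subcomplex under a morphism. -/
def image {Z : Complex g} (φ : Hom Y Z) (S : SubC Y) : SubC Z :=
  ⟨φ.mV '' S.sV, φ.mE '' S.sE, φ.mF '' S.sF⟩

end SubC

/-- The whole complex, as a subcomplex of itself. -/
def fullSub {g : ℕ} (Y : Complex g) : SubC Y := ⟨Set.univ, Set.univ, Set.univ⟩

namespace Complex

variable {g : ℕ} (Y : Complex g)

/-- Membership of a cell in a subcomplex. -/
def inSub (S : SubC Y) : Y.Cell → Prop := fun c =>
  match c with
  | Sum.inl v => v ∈ S.sV
  | Sum.inr (Sum.inl e) => e ∈ S.sE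
  | Sum.inr (Sum.inr f) => f ∈ S.sF

/-- Reachability of cells through the open complement of the subcomplex `S`
(= lying in the same connected component of the complement). -/
def reachS (S : SubC Y) (c c' : Y.Cell) : Prop :=
  Relation.ReflTransGen (fun a b => Y.incid a b ∧ ¬ Y.inSub S a ∧ ¬ Y.inSub S b) c c'

end Complex

/-- The closure (as a subcomplex) of the connected component of the cell `c₀` in the
complement of the subcomplex `S`. -/
def compCl {g : ℕ} (Y : Complex g) (S : SubC Y) (c₀ : Y.Cell) : SubC Y :=
  let cF : Set Y.F := {f | Y.reachS S c₀ (Y.fCell f)}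
  let cE : Set Y.E :=
    {e | Y.reachS S c₀ (Y.eCell e)} ∪ {e | ∃ f ∈ cF, ∃ b, (e, b) ∈ Y.bdry f}
  let cV : Set Y.V :=
    {v | Y.reachS S c₀ (Y.vCell v)} ∪ {v | ∃ e ∈ cE, Y.src e = v ∨ Y.dst e = v}
  ⟨cV, cE, cF⟩

/-- The subcomplex has exactly one boundary cycle (which covers all boundary darts). -/
def OneBdry {g : ℕ} (Y : Complex g) (S : SubC Y) : Prop :=
  ∃ δ, Y.BCycle S.sE S.sF δ ∧ ∀ d, Y.IsBDart S.sE S.sF d → d ∈ δ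

/-- The subcomplex has exactly two (disjoint) boundary cycles, covering all
boundary darts. -/
def TwoBdry {g : ℕ} (Y : Complex g) (S : SubC Y) : Prop :=
  ∃ δ₁ δ₂, Y.BCycle S.sE S.sF δ₁ ∧ Y.BCycle S.sE S.sF δ₂ ∧ δ₁.Disjoint δ₂ ∧
    ∀ d, Y.IsBDart S.sE S.sF d → d ∈ δ₁ ∨ d ∈ δ₂

/-- The boundary-reduced closure of `S` inside `Y`: the intersection of all
intermediate boundary reduced subcomplexes. -/
def BRcl {g : ℕ} (Y : Complex g) (S : SubC Y) : SubC Y where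
  sV := ⋂ T ∈ {T : SubC Y | T.IsSub ∧ S.le T ∧ Y.BoundaryReduced T.sE T.sF}, T.sV
  sE := ⋂ T ∈ {T : SubC Y | T.IsSub ∧ S.le T ∧ Y.BoundaryReduced T.sE T.sF}, T.sE
  sF := ⋂ T ∈ {T : SubC Y | T.IsSub ∧ S.le T ∧ Y.BoundaryReduced T.sE T.sF}, T.sF

/-- The strongly-boundary-reduced closure of `S` inside `Y`. -/
def SBRcl {g : ℕ} (Y : Complex g) (S : SubC Y) : SubC Y where
  sV := ⋂ T ∈ {T : SubC Y | T.IsSub ∧ S.le T ∧ Y.StronglyBoundaryReduced T.sE T.sF}, T.sV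
  sE := ⋂ T ∈ {T : SubC Y | T.IsSub ∧ S.le T ∧ Y.StronglyBoundaryReduced T.sE T.sF}, T.sE
  sF := ⋂ T ∈ {T : SubC Y | T.IsSub ∧ S.le T ∧ Y.StronglyBoundaryReduced T.sE T.sF}, T.sF

/-- An isomorphism between the subcomplex `S` of `Y` and the subcomplex `T` of `Z`. -/
structure SubEquiv {g : ℕ} (Y : Complex g) (S : SubC Y) (Z : Complex g) (T : SubC Z) where
  fV : Y.V → Z.V
  fE : Y.E → Z.E
  fF : Y.F → Z.F
  bijV : Set.BijOn fV S.sV T.sV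
  bijE : Set.BijOn fE S.sE T.sE
  bijF : Set.BijOn fF S.sF T.sF
  hsrc : ∀ e ∈ S.sE, Z.src (fE e) = fV (Y.src e)
  hdst : ∀ e ∈ S.sE, Z.dst (fE e) = fV (Y.dst e)
  hlab : ∀ e ∈ S.sE, Z.lab (fE e) = Y.lab e
  hbdry : ∀ f ∈ S.sF, Z.bdry (fF f) = (Y.bdry f).map fun d => (fE d.1, d.2)

/-- `FunnelComponent Y S c₀`: the connected component of the cell `c₀` in the
complement of the subcomplex `S` is a twice-punctured sphere with one funnel and
one fake-puncture.  Rendered combinatorially: the component contains infinitely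
many `4g`-gons (the funnel); there is a boundary cycle `δ` of `S` adjacent to the
component, it is unique (one fake-puncture), and every closed walk inside the
closure of the component is freely homotopic there to a power of `δ` or of its
inverse (so the closure is a half-open annulus bounded by `δ`). -/
def FunnelComponent {g : ℕ} (Y : Complex g) (S : SubC Y) (c₀ : Y.Cell) : Prop :=
  {f : Y.F | Y.reachS S c₀ (Y.fCell f)}.Infinite ∧
  ∃ δ : List Y.D, Y.BCycle S.sE S.sF δ ∧
    (∃ d ∈ δ, ∃ c', Y.incid (Y.eCell d.1) c' ∧ Y.reachS S c₀ c') ∧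
    (∀ δ', Y.BCycle S.sE S.sF δ' →
      (∃ d ∈ δ', ∃ c', Y.incid (Y.eCell d.1) c' ∧ Y.reachS S c₀ c') →
      ∃ n, δ' = δ.rotate n) ∧
    (∀ (v : Y.V) (l : List Y.D), Y.WalkFrom v v l →
      Y.InSet ({e | Y.reachS S c₀ (Y.eCell e)} ∪ {e | ∃ b, (e, b) ∈ δ}) l →
      ∃ n,
        Y.FreelyHomotopic ({e | Y.reachS S c₀ (Y.eCell e)} ∪ {e | ∃ b, (e, b) ∈ δ})
          {f | Y.reachS S c₀ (Y.fCell f)} l ((List.replicate n δ).flatten) ∨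
        Y.FreelyHomotopic ({e | Y.reachS S c₀ (Y.eCell e)} ∪ {e | ∃ b, (e, b) ∈ δ})
          {f | Y.reachS S c₀ (Y.fCell f)} l ((List.replicate n (Y.revW δ)).flatten))

/-- `Y` contains a funnel: an essential cycle `δ` of `Y` cutting off an infinite
region of `Y` which is attached to the rest of `Y` only along `δ`, contains no
boundary of `Y`, and is a half-open annulus (every loop inside is freely homotopic
to a power of `δ`); i.e. an end of `Y` which is a puncture of the ambient covering. -/
def HasFunnel {g : ℕ} (Y : Complex g) : Prop :=
  ∃ (δ : List Y.D) (sE : Set Y.E) (sF : Set Y.F),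
    Y.IsCycle δ ∧ Y.Essential Set.univ Set.univ δ ∧
    (∀ d ∈ δ, d.1 ∉ sE) ∧ sE.Nonempty ∧ sF.Infinite ∧
    (∀ f ∈ sF, ∀ d ∈ Y.bdry f, d.1 ∈ sE ∨ ∃ b, (d.1, b) ∈ δ) ∧
    (∀ f : Y.F, (∃ d ∈ Y.bdry f, d.1 ∈ sE) → f ∈ sF) ∧
    (∀ d : Y.D, d.1 ∈ sE → ¬ Y.IsBDart Set.univ Set.univ d) ∧
    (∀ v : Y.V, (∃ e ∈ sE, Y.src e = v ∨ Y.dst e = v) → (∀ d ∈ δ, Y.dTail d ≠ v) →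
      ∀ e' : Y.E, (Y.src e' = v ∨ Y.dst e' = v) → e' ∈ sE) ∧
    (∀ (v : Y.V) (l : List Y.D), Y.WalkFrom v v l →
      Y.InSet (sE ∪ {e | ∃ b, (e, b) ∈ δ}) l →
      ∃ n,
        Y.FreelyHomotopic (sE ∪ {e | ∃ b, (e, b) ∈ δ}) sF l
          ((List.replicate n δ).flatten) ∨
        Y.FreelyHomotopic (sE ∪ {e | ∃ b, (e, b) ∈ δ}) sF l
          ((List.replicate n (Y.revW δ)).flatten))

/-- The fundamental group of `Y` is cyclic: some closed walk `c` generates all free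
homotopy classes of loops.  (For a connected surface this is *equivalent to NOT
having genus ≥ 1 or at least 3 boundary components/punctures*.) -/
def CyclicPi1 {g : ℕ} (Y : Complex g) : Prop :=
  ∃ c : List Y.D, ∀ (v : Y.V) (l : List Y.D), Y.WalkFrom v v l →
    ∃ n,
      Y.FreelyHomotopic Set.univ Set.univ l ((List.replicate n c).flatten) ∨
      Y.FreelyHomotopic Set.univ Set.univ l ((List.replicate n (Y.revW c)).flatten)

/-! ### The covering space `J\~Σ_g` and the core surface of `J` -/

/-- Right cosets `Jx` of `J` in `Γ_g` — the vertices (and faces) of `J\~Σ_g`. -/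
abbrev Cos (g : ℕ) (J : Subgroup (Gamma g)) := Quotient (QuotientGroup.rightRel J)

/-- The coset `Jx`. -/
def mkCos (g : ℕ) (J : Subgroup (Gamma g)) (x : Gamma g) : Cos g J :=
  Quotient.mk _ x

/-- Right multiplication on right cosets. -/
def rmul (g : ℕ) (J : Subgroup (Gamma g)) (x : Gamma g) : Cos g J → Cos g J :=
  Quotient.map (· * x) (by
    intro a b hab
    have h1 : b * a⁻¹ ∈ J := QuotientGroup.rightRel_apply.mp hab
    refine QuotientGroup.rightRel_apply.mpr ?_
    have h2 : b * x * (a * x)⁻¹ = b * a⁻¹ := by group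
    rw [h2]; exact h1)

/-- The walk in `J\~Σ_g` starting at a vertex and reading a given word. -/
def relWalk (g : ℕ) (J : Subgroup (Gamma g)) :
    Cos g J → List (Letter g) → List ((Cos g J × Fin (2 * g)) × Bool)
  | _, [] => []
  | v, (ℓ, true) :: w =>
      ((v, ℓ), true) :: relWalk g J (rmul g J (PresentedGroup.of ℓ) v) w
  | v, (ℓ, false) :: w =>
      ((rmul g J (PresentedGroup.of ℓ)⁻¹ v, ℓ), false) ::
        relWalk g J (rmul g J (PresentedGroup.of ℓ)⁻¹ v) w

/-- The covering space `Υ = J\~Σ_g` of `Σ_g` corresponding to the subgroup `J`,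
with the CW-structure pulled back from `Σ_g`: vertices and `4g`-gons are the right
cosets of `J`, and each vertex carries one outgoing edge per label. -/
def cover (g : ℕ) (J : Subgroup (Gamma g)) : Complex g where
  V := Cos g J
  E := Cos g J × Fin (2 * g)
  F := Cos g J
  src e := e.1
  dst e := rmul g J (PresentedGroup.of e.2) e.1
  lab e := e.2
  bdry v := relWalk g J v (relatorWord g)

/-- The map `J₁\~Σ_g → J₂\~Σ_g` on vertices, for `J₁ ≤ J₂`. -/
def coverMapV {g : ℕ} {J₁ J₂ : Subgroup (Gamma g)} (h : J₁ ≤ J₂) :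
    Cos g J₁ → Cos g J₂ :=
  Quotient.map id (by
    intro a b hab
    have h1 : b * a⁻¹ ∈ J₁ := QuotientGroup.rightRel_apply.mp hab
    exact QuotientGroup.rightRel_apply.mpr (h h1))

/-- The natural covering morphism on edges. -/
def coverMapE {g : ℕ} {J₁ J₂ : Subgroup (Gamma g)} (h : J₁ ≤ J₂)
    (e : (cover g J₁).E) : (cover g J₂).E :=
  (coverMapV h e.1, e.2)

/-- The natural covering morphism on darts. -/
def coverMapD {g : ℕ} {J₁ J₂ : Subgroup (Gamma g)} (h : J₁ ≤ J₂)
    (d : (cover g J₁).D) : (cover g J₂).D :=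
  (coverMapE h d.1, d.2)

/-- The cycle `c` in `J\~Σ_g` represents the conjugacy class of `γ` in `J`
(conjugacy classes in `J` ↔ free homotopy classes of essential loops in `J\~Σ_g`). -/
def RepCls {g : ℕ} (J : Subgroup (Gamma g)) (c : List ((cover g J).D))
    (γ : Gamma g) : Prop :=
  ∃ x j : Gamma g, j ∈ J ∧
    (cover g J).WalkFrom (mkCos g J x) (mkCos g J x) c ∧
    x * wordG ((cover g J).wordOf c) * x⁻¹ = j * γ * j⁻¹

/-- Step (i) of the definition of the core surface: the edges lying on some
shortest representative cycle of an essential free homotopy class. -/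
def coreE1 (g : ℕ) (J : Subgroup (Gamma g)) : Set (cover g J).E :=
  {e | ∃ c, (cover g J).GoodCycle c ∧ ∃ b, (e, b) ∈ c}

/-- The vertices of step (i) of the definition of the core surface. -/
def coreV1 (g : ℕ) (J : Subgroup (Gamma g)) : Set (cover g J).V :=
  {v | ∃ e ∈ coreE1 g J, (cover g J).src e = v ∨ (cover g J).dst e = v}

/-- Step (i) of the definition of the core surface, as a subcomplex of `J\~Σ_g`. -/
def coreS1 (g : ℕ) (J : Subgroup (Gamma g)) : SubC (cover g J) :=
  ⟨coreV1 g J, coreE1 g J, ∅⟩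

/-- A cell of `J\~Σ_g` lying in a connected component of the complement of step (i)
which contains only finitely many `4g`-gons. -/
def coreFin (g : ℕ) (J : Subgroup (Gamma g)) (c : (cover g J).Cell) : Prop :=
  ¬ (cover g J).inSub (coreS1 g J) c ∧
  {f : (cover g J).F | (cover g J).reachS (coreS1 g J) c ((cover g J).fCell f)}.Finite

open Classical in
/-- The core surface `Core(J)` of a subgroup `J ≤ Γ_g`, as a subcomplex of
`Υ = J\~Σ_g`: (i) the union of all shortest representative cycles of essential
free homotopy classes in `Υ`, together with (ii) all connected components of the
complement containing finitely many `4g`-gons.  For the trivial subgroup it is a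
single vertex. -/
def coreSub (g : ℕ) (J : Subgroup (Gamma g)) : SubC (cover g J) :=
  if J = ⊥ then ⟨{mkCos g J 1}, ∅, ∅⟩
  else
    ⟨coreV1 g J ∪ {v | coreFin g J ((cover g J).vCell v)},
     coreE1 g J ∪ {e | coreFin g J ((cover g J).eCell e)},
     {f | coreFin g J ((cover g J).fCell f)}⟩

namespace S10

variable {g : ℕ} {X : Complex g}

theorem dRev_dRev (d : X.D) : X.dRev (X.dRev d) = d := by
  cases d; simp [Complex.dRev]

theorem dTail_dRev (d : X.D) : X.dTail (X.dRev d) = X.dHead d := by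
  rcases d with ⟨e, _ | _⟩ <;> simp [Complex.dRev, Complex.dTail, Complex.dHead]

theorem dHead_dRev (d : X.D) : X.dHead (X.dRev d) = X.dTail d := by
  rcases d with ⟨e, _ | _⟩ <;> simp [Complex.dRev, Complex.dTail, Complex.dHead]

theorem dRev_ne (d : X.D) : X.dRev d ≠ d := by
  rcases d with ⟨e, _ | _⟩ <;> simp [Complex.dRev]

theorem revW_append (a b : List X.D) : X.revW (a ++ b) = X.revW b ++ X.revW a := by
  simp [Complex.revW]

theorem revW_revW (a : List X.D) : X.revW (X.revW a) = a := by
  have : (X.dRev ∘ X.dRev) = id := by funext d; exact dRev_dRev d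
  simp [Complex.revW, List.map_reverse, this]

theorem mem_revW {a : List X.D} {d : X.D} : d ∈ X.revW a ↔ X.dRev d ∈ a := by
  simp only [Complex.revW, List.mem_reverse, List.mem_map]
  constructor
  · rintro ⟨x, hx, rfl⟩; rwa [dRev_dRev]
  · intro h; exact ⟨_, h, dRev_dRev d⟩

theorem walk_nil_iff {u v : X.V} : X.WalkFrom u v [] ↔ u = v := by
  constructor
  · intro h; cases h; rfl
  · rintro rfl; exact .nil _

theorem walk_cons_iff {u v : X.V} {d : X.D} {l : List X.D} :
    X.WalkFrom u v (d :: l) ↔ X.dTail d = u ∧ X.WalkFrom (X.dHead d) v l := by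
  constructor
  · intro h; cases h with
    | cons _ h => exact ⟨rfl, h⟩
  · rintro ⟨rfl, h⟩; exact .cons _ h

theorem walk_append_iff {u w : X.V} {a b : List X.D} :
    X.WalkFrom u w (a ++ b) ↔ ∃ v, X.WalkFrom u v a ∧ X.WalkFrom v w b := by
  induction a generalizing u with
  | nil => simp [walk_nil_iff]
  | cons d a ih => simp [walk_cons_iff, ih, and_assoc]

theorem walk_app {u v w : X.V} {a b : List X.D} (h : X.WalkFrom u v a)
    (h' : X.WalkFrom v w b) : X.WalkFrom u w (a ++ b) := walk_append_iff.2 ⟨v, h, h'⟩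

theorem walk_rev {u v : X.V} {l : List X.D} (h : X.WalkFrom u v l) :
    X.WalkFrom v u (X.revW l) := by
  induction h with
  | nil v => exact .nil v
  | @cons d v l h ih =>
    have : X.revW (d :: l) = X.revW l ++ [X.dRev d] := revW_append [d] _
    rw [this]
    refine walk_app ih ?_
    rw [walk_cons_iff, walk_nil_iff, dTail_dRev, dHead_dRev]; simp

theorem walk_unique {u v u' v' : X.V} {l : List X.D} (hl : l ≠ []) (h : X.WalkFrom u v l)
    (h' : X.WalkFrom u' v' l) : u = u' := by
  cases l with
  | nil => simp at hl
  | cons d l => rw [walk_cons_iff] at h h'; rw [← h.1, ← h'.1]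

/-! homotopies -/

def Hm (u v : X.V) (a b : List X.D) : Prop := X.Homotopic Set.univ Set.univ u v a b

theorem hm_refl {u v : X.V} (a : List X.D) : Hm u v a a := .refl _
theorem Hm.symm {u v : X.V} {a b : List X.D} (h : Hm u v a b) : Hm u v b a :=
  Relation.EqvGen.symm _ _ h
theorem Hm.trans {u v : X.V} {a b c : List X.D} (h : Hm u v a b) (h' : Hm u v b c) :
    Hm u v a c := Relation.EqvGen.trans _ _ _ h h'

theorem inSet_univ (l : List X.D) : X.InSet Set.univ l := fun _ _ => trivial

theorem elem_ctx {a b : List X.D} (p q : List X.D) (h : X.elemMove Set.univ Set.univ a b) :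
    X.elemMove Set.univ Set.univ (p ++ a ++ q) (p ++ b ++ q) := by
  rcases h with ⟨l₁, l₂, d, hd, rfl, rfl⟩ | ⟨l₁, l₂, b, hb, rfl, rfl⟩
  · exact Or.inl ⟨p ++ l₁, l₂ ++ q, d, hd, by simp, by simp⟩
  · exact Or.inr ⟨p ++ l₁, l₂ ++ q, b, hb, by simp, by simp⟩

theorem hm_ctx {u v w z : X.V} {a b p q : List X.D} (hp : X.WalkFrom w u p)
    (hq : X.WalkFrom v z q) (h : Hm u v a b) : Hm w z (p ++ a ++ q) (p ++ b ++ q) := by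
  unfold Hm Complex.Homotopic at h
  induction h with
  | refl x => exact hm_refl _
  | symm x y _ ih => exact ih.symm
  | trans x y z _ _ ih ih' => exact ih.trans ih'
  | rel x y h =>
    obtain ⟨h1, h2, -, -, h3⟩ := h
    refine .rel _ _ ⟨walk_app (walk_app hp h1) hq, walk_app (walk_app hp h2) hq,
      inSet_univ _, inSet_univ _, ?_⟩
    exact h3.imp (elem_ctx p q) (elem_ctx p q)

theorem hm_back {u v w : X.V} {a b : List X.D} (d : X.D) (ha : X.WalkFrom u v a)
    (hb : X.WalkFrom v w b) (hd : X.dTail d = v) :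
    Hm u w (a ++ d :: X.dRev d :: b) (a ++ b) := by
  refine .rel _ _ ⟨walk_app ha ?_, walk_app ha hb, inSet_univ _, inSet_univ _,
    Or.inr (Or.inl ⟨a, b, d, trivial, rfl, rfl⟩)⟩
  rw [walk_cons_iff, walk_cons_iff, dTail_dRev, dHead_dRev, hd]
  exact ⟨rfl, rfl, hb⟩

theorem hm_cancel {u v : X.V} {q : List X.D} (hq : X.WalkFrom u v q) :
    Hm u u (q ++ X.revW q) [] := by
  induction hq with
  | nil v => exact hm_refl _
  | @cons d v l h ih =>
    have e : X.revW (d :: l) = X.revW l ++ [X.dRev d] := revW_append [d] _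
    rw [e]
    have w1 : X.WalkFrom (X.dTail d) (X.dHead d) [d] := .cons _ (.nil _)
    have w2 : X.WalkFrom (X.dHead d) (X.dTail d) [X.dRev d] := walk_rev w1
    have h1 := hm_ctx w1 w2 ih
    have h2 := hm_back d (.nil _) (.nil _) rfl
    simp only [List.nil_append, List.append_nil, List.cons_append, List.append_assoc] at h1 h2 ⊢
    exact h1.trans h2

theorem hm_mid {u v w z : X.V} {a q b : List X.D} (ha : X.WalkFrom u v a)
    (hq : X.WalkFrom v w q) (hb : X.WalkFrom v z b) :
    Hm u z (a ++ (q ++ (X.revW q ++ b))) (a ++ b) := by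
  simpa using hm_ctx ha hb (hm_cancel hq)

theorem hm_mid' {u v w z : X.V} {a q b : List X.D} (ha : X.WalkFrom u v a)
    (hq : X.WalkFrom w v q) (hb : X.WalkFrom v z b) :
    Hm u z (a ++ (X.revW q ++ (q ++ b))) (a ++ b) := by
  simpa [revW_revW] using hm_mid ha (walk_rev hq) hb

def FH (u : X.V) (a : List X.D) (v : X.V) (b : List X.D) : Prop :=
  X.WalkFrom u u a ∧ X.WalkFrom v v b ∧ ∃ q, X.WalkFrom u v q ∧ Hm u u a (q ++ (b ++ X.revW q))

theorem FH.toFree {u v : X.V} {a b : List X.D} (h : FH u a v b) :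
    X.FreelyHomotopic Set.univ Set.univ a b := by
  obtain ⟨ha, hb, q, hq, h⟩ := h
  exact ⟨u, v, q, ha, hb, hq, inSet_univ _, inSet_univ _, inSet_univ _, by simpa [Hm] using h⟩

theorem fh_refl {u : X.V} {a : List X.D} (ha : X.WalkFrom u u a) : FH u a u a :=
  ⟨ha, ha, [], .nil _, by simpa [Complex.revW] using hm_refl a⟩

theorem fh_of_hm {u : X.V} {a b : List X.D} (ha : X.WalkFrom u u a) (hb : X.WalkFrom u u b)
    (h : Hm u u a b) : FH u a u b :=
  ⟨ha, hb, [], .nil _, by simpa [Complex.revW] using h⟩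

theorem FH.trans {u v w : X.V} {a b c : List X.D} (h : FH u a v b) (h' : FH v b w c) :
    FH u a w c := by
  obtain ⟨ha, hb, q, hq, h⟩ := h
  obtain ⟨-, hc, r, hr, h'⟩ := h'
  refine ⟨ha, hc, q ++ r, walk_app hq hr, h.trans ?_⟩
  simpa [revW_append] using hm_ctx hq (walk_rev hq) h'

theorem FH.symm {u v : X.V} {a b : List X.D} (h : FH u a v b) : FH v b u a := by
  obtain ⟨ha, hb, q, hq, h⟩ := h
  refine ⟨hb, ha, X.revW q, walk_rev hq, ?_⟩
  rw [revW_revW]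
  have h1 := hm_ctx (walk_rev hq) hq h
  have h2 := hm_mid' (.nil v) hq (walk_app hb (walk_app (walk_rev hq) hq))
  have h3 := hm_mid' hb hq (.nil v)
  simp only [List.nil_append, List.append_nil, List.append_assoc] at h1 h2 h3 ⊢
  exact (h1.trans (h2.trans h3)).symm

theorem fh_rot {u v : X.V} {a b : List X.D} (ha : X.WalkFrom u v a) (hb : X.WalkFrom v u b) :
    FH u (a ++ b) v (b ++ a) := by
  refine ⟨walk_app ha hb, walk_app hb ha, a, ha, ?_⟩
  have := hm_mid (walk_app ha hb) ha (.nil u)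
  simpa using this.symm

def pw (n : ℕ) (c : List X.D) : List X.D := (List.replicate n c).flatten

theorem pw_succ (n : ℕ) (c : List X.D) : pw (n + 1) c = c ++ pw n c := by
  simp [pw, List.replicate_succ]

theorem pw_succ' (n : ℕ) (c : List X.D) : pw (n + 1) c = pw n c ++ c := by
  simp [pw, List.replicate_succ']

theorem pw_zero (c : List X.D) : pw 0 c = [] := by simp [pw]

theorem pw_rev (n : ℕ) (c : List X.D) : X.revW (pw n c) = pw n (X.revW c) := by
  induction n with
  | zero => simp [pw_zero, Complex.revW]
  | succ n ih => rw [pw_succ, revW_append, ih, pw_succ']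

theorem walk_pw {u : X.V} {c : List X.D} (n : ℕ) (h : X.WalkFrom u u c) :
    X.WalkFrom u u (pw n c) := by
  induction n with
  | zero => rw [pw_zero]; exact .nil _
  | succ n ih => rw [pw_succ]; exact walk_app h ih

theorem FH.pw {u v : X.V} {a b : List X.D} (n : ℕ) (h : FH u a v b) :
    FH u (pw n a) v (pw n b) := by
  obtain ⟨ha, hb, q, hq, h⟩ := h
  refine ⟨walk_pw n ha, walk_pw n hb, q, hq, ?_⟩
  induction n with
  | zero => simpa [pw_zero] using (hm_cancel hq).symm
  | succ n ih =>
    rw [pw_succ, pw_succ]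
    have h1 := hm_ctx (.nil _) (walk_pw n ha) h
    have h2 := hm_ctx (walk_app hq (walk_app hb (walk_rev hq))) (.nil _) ih
    have h3 := hm_mid' (walk_app hq hb) hq (walk_app (walk_pw n hb) (walk_rev hq))
    simp only [List.nil_append, List.append_nil, List.append_assoc] at h1 h2 h3 ⊢
    exact h1.trans (h2.trans h3)

/-! cochains -/

def ev (φ : X.D → ℤ) (l : List X.D) : ℤ := (l.map φ).sum

theorem ev_append (φ : X.D → ℤ) (a b : List X.D) : ev φ (a ++ b) = ev φ a + ev φ b := by
  simp [ev]

theorem ev_nil (φ : X.D → ℤ) : ev φ [] = 0 := rfl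

theorem ev_cons (φ : X.D → ℤ) (d : X.D) (b : List X.D) : ev φ (d :: b) = φ d + ev φ b := by
  simp [ev]

def Anti (φ : X.D → ℤ) : Prop := ∀ d, φ (X.dRev d) = - φ d

theorem ev_rev {φ : X.D → ℤ} (hφ : Anti φ) (a : List X.D) : ev φ (X.revW a) = - ev φ a := by
  induction a with
  | nil => simp [ev, Complex.revW]
  | cons d a ih =>
    have e : X.revW (d :: a) = X.revW a ++ [X.dRev d] := revW_append [d] _
    rw [e, ev_append, ih, ev_cons, ev_cons, ev_nil, hφ]; ring

theorem ev_rotate (φ : X.D → ℤ) (a : List X.D) (n : ℕ) : ev φ (a.rotate n) = ev φ a :=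
  ((List.rotate_perm a n).map φ).sum_eq

theorem ev_elem {φ : X.D → ℤ} (hφ : Anti φ) (hc : ∀ f, ev φ (X.bdry f) = 0) {a b : List X.D}
    (h : X.elemMove Set.univ Set.univ a b) : ev φ a = ev φ b := by
  rcases h with ⟨l₁, l₂, d, hd, rfl, rfl⟩ | ⟨l₁, l₂, b, ⟨f, -, n, hb⟩, rfl, rfl⟩
  · simp only [ev_append, ev_cons, hφ d]; ring
  · have : ev φ b = 0 := by
      rcases hb with rfl | rfl
      · rw [ev_rotate, hc]
      · rw [ev_rev hφ, ev_rotate, hc, neg_zero]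
    simp only [ev_append, this]; ring

theorem ev_hm {φ : X.D → ℤ} (hφ : Anti φ) (hc : ∀ f, ev φ (X.bdry f) = 0) {u v : X.V}
    {a b : List X.D} (h : Hm u v a b) : ev φ a = ev φ b := by
  unfold Hm Complex.Homotopic at h
  induction h with
  | refl x => rfl
  | symm x y _ ih => exact ih.symm
  | trans x y z _ _ ih ih' => exact ih.trans ih'
  | rel x y h =>
    obtain ⟨-, -, -, -, h3⟩ := h
    rcases h3 with h | h
    · exact ev_elem hφ hc h
    · exact (ev_elem hφ hc h).symm

theorem ev_fh {φ : X.D → ℤ} (hφ : Anti φ) (hc : ∀ f, ev φ (X.bdry f) = 0) {u v : X.V}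
    {a b : List X.D} (h : FH u a v b) : ev φ a = ev φ b := by
  obtain ⟨-, -, q, -, h⟩ := h
  rw [ev_hm hφ hc h, ev_append, ev_append, ev_rev hφ]; ring

/-! local structure -/

theorem posArr_eq (d : X.D) : posArr (X.dLet d) = posLv (X.dLet (X.dRev d)) := by
  rcases d with ⟨e, _ | _⟩ <;> simp [Complex.dRev, Complex.dLet, posArr, posLv]

theorem posLv_lt (s : Letter g) : posLv s < 4 * g := by
  rcases s with ⟨⟨l, hl⟩, _ | _⟩ <;> simp only [posLv, posIn, posOut] <;> simp <;> split_ifs <;> omega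

theorem posArr_lt (d : X.D) : posArr (X.dLet d) < 4 * g := by
  rw [posArr_eq]; exact posLv_lt _

theorem posLv_inj (s t : Letter g) (h : posLv s = posLv t) : s = t := by
  rcases s with ⟨⟨l, hl⟩, _ | _⟩ <;> rcases t with ⟨⟨m, hm⟩, _ | _⟩ <;>
    simp only [posLv, posIn, posOut] at h <;> simp at h ⊢ <;> split_ifs at h <;> omega

theorem rel_step (g : ℕ) (i j : Fin (4 * g)) (h : (j : ℕ) = ((i : ℕ) + 1) % (4 * g)) :
    posLv (relLabel g j, relSign g j) = (posArr (relLabel g i, relSign g i) + 1) % (4 * g) := by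
  obtain ⟨i, hi⟩ := i
  obtain ⟨j, hj⟩ := j
  simp only at h
  have hlt : (posArr (relLabel g ⟨i, hi⟩, relSign g ⟨i, hi⟩) + 1) =
      (if i % 4 = 3 then i + 1 else if i % 4 = 0 then i + 3 else if i % 4 = 1 then i + 1
        else i - 1) := by
    simp only [posArr, posIn, posOut, relSign, relLabel]
    have h4 : i % 4 = 0 ∨ i % 4 = 1 ∨ i % 4 = 2 ∨ i % 4 = 3 := by omega
    rcases h4 with h4 | h4 | h4 | h4 <;> simp [h4] <;> omega
  have hlt2 : posLv (relLabel g ⟨j, hj⟩, relSign g ⟨j, hj⟩) =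
      (if j % 4 = 0 then j else if j % 4 = 1 then j + 2 else if j % 4 = 2 then j
        else j - 2) := by
    simp only [posLv, posIn, posOut, relSign, relLabel]
    have h4 : j % 4 = 0 ∨ j % 4 = 1 ∨ j % 4 = 2 ∨ j % 4 = 3 := by omega
    rcases h4 with h4 | h4 | h4 | h4 <;> simp [h4] <;> omega
  rw [hlt, hlt2]
  by_cases hc : i + 1 < 4 * g
  · rw [Nat.mod_eq_of_lt hc] at h
    have hb : (if i % 4 = 3 then i + 1 else if i % 4 = 0 then i + 3 else if i % 4 = 1 then i + 1
        else i - 1) < 4 * g := by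
      clear hlt hlt2
      repeat' split
      all_goals omega
    rw [Nat.mod_eq_of_lt hb]
    clear hlt hlt2 hb
    repeat' split
    all_goals omega
  · have : i + 1 = 4 * g := by omega
    rw [this, Nat.mod_self] at h
    have h3 : i % 4 = 3 := by omega
    rw [if_pos h3, this, Nat.mod_self, h]; simp

theorem relatorWord_length (g : ℕ) : (relatorWord g).length = 4 * g := by simp [relatorWord]

theorem relatorWord_nodup (g : ℕ) : (relatorWord g).Nodup := by
  refine List.Nodup.map ?_ (List.nodup_finRange _)
  rintro ⟨i, hi⟩ ⟨j, hj⟩ h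
  simp only [relLabel, relSign, Prod.mk.injEq, Fin.mk.injEq, decide_eq_decide] at h ⊢
  omega

structure Surf (X : Complex g) : Prop where
  tl : ∀ d d' : X.D, X.dTail d = X.dTail d' → X.dLet d = X.dLet d' → d = d'
  wd : ∀ f, X.wordOf (X.bdry f) = relatorWord g
  cl : ∀ f, ∃ v, X.WalkFrom v v (X.bdry f)
  inj : Function.Injective X.bdry

theorem mem_map_mD {Z : Complex g} (φ : Hom X Z) {u v : Z.V} {l : List X.D} (hl : l ≠ [])
    (hV : Function.Injective φ.mV)
    (h : Z.WalkFrom u v (l.map φ.mD)) : ∃ u' v', φ.mV u' = u ∧ φ.mV v' = v ∧ X.WalkFrom u' v' l := by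
  have hh : ∀ d, Z.dHead (φ.mD d) = φ.mV (X.dHead d) := by
    rintro ⟨e, _ | _⟩ <;> simp [Hom.mD, Complex.dHead, φ.hsrc, φ.hdst]
  have ht : ∀ d, Z.dTail (φ.mD d) = φ.mV (X.dTail d) := by
    rintro ⟨e, _ | _⟩ <;> simp [Hom.mD, Complex.dTail, φ.hsrc, φ.hdst]
  induction l generalizing u with
  | nil => exact absurd rfl hl
  | cons d l ih =>
    rw [List.map_cons, walk_cons_iff, ht, hh] at h
    by_cases hn : l = []
    · subst hn
      rw [List.map_nil, walk_nil_iff] at h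
      exact ⟨_, _, h.1, h.2, .cons _ (.nil _)⟩
    · obtain ⟨u', v', h1, h2, h3⟩ := ih hn h.2
      rw [hV h1] at h3
      exact ⟨_, _, h.1, h2, .cons _ h3⟩

theorem surf_of_tiled (hg : 2 ≤ g) (hX : X.IsTiledSurface) : Surf X := by
  obtain ⟨Z, ⟨hP1, hP3, -⟩, φ, hV, hE, hF⟩ := hX
  have hb : ∀ f, Z.bdry (φ.mF f) = (X.bdry f).map φ.mD := φ.hbdry
  have hw : ∀ f, X.wordOf (X.bdry f) = relatorWord g := by
    intro f
    rw [← (hP3.1 (φ.mF f)).2, hb]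
    simp only [Complex.wordOf, List.map_map]
    apply List.map_congr_left
    intro d _
    simp [Complex.dLet, Hom.mD, φ.hlab]
  refine ⟨?_, hw, ?_, ?_⟩
  · rintro ⟨e, b⟩ ⟨e', b'⟩ h h'
    simp only [Complex.dLet, Prod.mk.injEq] at h'
    obtain ⟨h1, rfl⟩ := h'
    have : e = e' := by
      apply hE
      cases b
      · apply hP1.2
        · rw [φ.hdst, φ.hdst]; simp [Complex.dTail] at h; rw [h]
        · rw [φ.hlab, φ.hlab, h1]
      · apply hP1.1
        · rw [φ.hsrc, φ.hsrc]; simp [Complex.dTail] at h; rw [h]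
        · rw [φ.hlab, φ.hlab, h1]
    rw [this]
  · intro f
    obtain ⟨v, hv⟩ := (hP3.1 (φ.mF f)).1
    rw [hb] at hv
    have hne : X.bdry f ≠ [] := by
      intro h
      have := congrArg List.length (hw f)
      rw [relatorWord_length, h] at this
      simp [Complex.wordOf] at this
      omega
    obtain ⟨u', v', h1, h2, h3⟩ := mem_map_mD φ hne hV hv
    rw [hV (h1.trans h2.symm)] at h3
    exact ⟨_, h3⟩
  · intro f f' h
    apply hF
    apply hP3.2
    rw [hb, hb, h]

theorem walk_adj {u v : X.V} {l : List X.D} (h : X.WalkFrom u v l) (i : ℕ) (hi : i + 1 < l.length) :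
    X.dHead l[i] = X.dTail l[i + 1] := by
  induction h generalizing i with
  | nil => simp at hi
  | @cons d v l h ih =>
    cases i with
    | zero =>
      cases l with
      | nil => simp at hi
      | cons d' l => rw [walk_cons_iff] at h; simpa using h.1.symm
    | succ i => simpa using ih i (by simpa using hi)

theorem walk_last {u v : X.V} {l : List X.D} (h : X.WalkFrom u v l) (hi : 0 < l.length) :
    X.dTail l[0] = u ∧ X.dHead l[l.length - 1] = v := by
  induction h with
  | nil => simp at hi
  | @cons d v l h ih =>
    cases l with
    | nil => rw [walk_nil_iff] at h; simpa using h
    | cons d' l => simpa using (ih (by simp)).2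

theorem infix_iff {α : Type*} (L : List α) (n : ℕ) (hn : L.length = n) (h0 : 2 ≤ n) (d d' : α) :
    [d, d'] <:+: (L ++ L) ↔ ∃ i j, ∃ (hi : i < L.length) (hj : j < L.length),
      j = (i + 1) % n ∧ L[i] = d ∧ L[j] = d' := by
  subst hn
  constructor
  · rintro ⟨s, t, h⟩
    have hl : s.length + 2 + t.length = L.length + L.length := by
      have := congrArg List.length h; simpa [add_assoc, add_comm, add_left_comm] using this
    have h1 : (L ++ L)[s.length]? = some d := by rw [← h]; simp
    have h2 : (L ++ L)[s.length + 1]? = some d' := by rw [← h]; simp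
    have key : ∀ k x, k < L.length + L.length → (L ++ L)[k]? = some x →
        ∃ hk : k % L.length < L.length, L[k % L.length] = x := by
      intro k x hk hx
      refine ⟨Nat.mod_lt _ (by omega), ?_⟩
      by_cases hc : k < L.length
      · rw [List.getElem?_append_left hc] at hx
        rw [List.getElem?_eq_getElem hc] at hx
        simpa [Nat.mod_eq_of_lt hc] using hx
      · rw [List.getElem?_append_right (by omega), List.getElem?_eq_getElem (by omega)] at hx
        have : k % L.length = k - L.length := by
          rw [Nat.mod_eq_sub_mod (by omega), Nat.mod_eq_of_lt (by omega)]
        simpa [this] using hx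
    obtain ⟨a1, a2⟩ := key _ _ (by omega) h1
    obtain ⟨b1, b2⟩ := key _ _ (by omega) h2
    exact ⟨_, _, a1, b1, by simp, a2, b2⟩
  · rintro ⟨i, j, hi, hj, hij, rfl, rfl⟩
    have e : ∀ k (hk : k + 1 < (L ++ L).length), [(L ++ L)[k], (L ++ L)[k + 1]] <:+: L ++ L := by
      intro k hk
      refine ⟨(L ++ L).take k, (L ++ L).drop (k + 2), ?_⟩
      conv_rhs => rw [← List.take_append_drop k (L ++ L)]
      have hk0 : k < (L ++ L).length := by omega
      rw [List.drop_eq_getElem_cons hk0, List.drop_eq_getElem_cons hk]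
      simp only [List.append_assoc, List.cons_append, List.nil_append]
    have hh : i + 1 < (L ++ L).length := by rw [List.length_append]; omega
    have := e i hh
    have e1 : (L ++ L)[i] = L[i] := List.getElem_append_left hi
    have e2 : (L ++ L)[i + 1] = L[j] := by
      by_cases hc : i + 1 < L.length
      · rw [Nat.mod_eq_of_lt hc] at hij
        subst hij
        exact List.getElem_append_left hc
      · have h1 : i + 1 = L.length := by omega
        rw [h1, Nat.mod_self] at hij
        subst hij
        rw [List.getElem_append_right (by omega)]
        simp only [h1, Nat.sub_self]
    rwa [e1, e2] at this

namespace Surf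

theorem len (S : Surf X) (f : X.F) : (X.bdry f).length = 4 * g := by
  have := congrArg List.length (S.wd f)
  rw [relatorWord_length] at this
  simpa [Complex.wordOf] using this

theorem lett (S : Surf X) (f : X.F) (i : ℕ) (hi : i < (X.bdry f).length) :
    X.dLet (X.bdry f)[i] =
      (relLabel g ⟨i, S.len f ▸ hi⟩, relSign g ⟨i, S.len f ▸ hi⟩) := by
  have h2 : i < (relatorWord g).length := by rw [relatorWord_length, ← S.len f]; exact hi
  have h3 : i < (X.wordOf (X.bdry f)).length := by simpa [Complex.wordOf] using hi
  have h1 : (X.wordOf (X.bdry f))[i] = (relatorWord g)[i] := by simp only [S.wd f]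
  simpa [Complex.wordOf, relatorWord] using h1

theorem nodup (S : Surf X) (f : X.F) : (X.bdry f).Nodup := by
  have := S.wd f ▸ relatorWord_nodup g
  exact List.Nodup.of_map _ this

theorem adj_cyc (S : Surf X) (f : X.F) (i j : ℕ) (hi : i < (X.bdry f).length) (hj : j < (X.bdry f).length)
    (h : j = (i + 1) % (4 * g)) : X.dHead (X.bdry f)[i] = X.dTail (X.bdry f)[j] := by
  obtain ⟨v, hv⟩ := S.cl f
  have hl := S.len f
  by_cases hc : i + 1 < 4 * g
  · rw [Nat.mod_eq_of_lt hc] at h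
    subst h
    exact walk_adj hv i hj
  · have : i + 1 = 4 * g := by omega
    rw [this, Nat.mod_self] at h
    subst h
    obtain ⟨h1, h2⟩ := walk_last hv hj
    rw [h1]
    have e : i = (X.bdry f).length - 1 := by omega
    subst e
    exact h2

theorem pos (S : Surf X) (d d' : X.D) (h : X.dTail d = X.dTail d')
    (h' : posLv (X.dLet d) = posLv (X.dLet d')) : d = d' :=
  S.tl d d' h (posLv_inj _ _ h')

theorem n1 (S : Surf X) (hg : 2 ≤ g) {f : X.F} {d d' : X.D} (h : [d, d'] <:+: (X.bdry f ++ X.bdry f)) :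
    d ∈ X.bdry f ∧ d' ∈ X.bdry f ∧ X.dHead d = X.dTail d' ∧
      posLv (X.dLet d') = (posArr (X.dLet d) + 1) % (4 * g) := by
  rw [infix_iff _ _ (S.len f) (by omega)] at h
  obtain ⟨i, j, hi, hj, hij, rfl, rfl⟩ := h
  refine ⟨List.getElem_mem _, List.getElem_mem _, S.adj_cyc f i j hi hj hij, ?_⟩
  rw [S.lett, S.lett]
  exact rel_step g _ _ hij

theorem n2 (S : Surf X) (hg : 2 ≤ g) {f : X.F} {d : X.D} (h : d ∈ X.bdry f) :
    ∃ d', [d, d'] <:+: (X.bdry f ++ X.bdry f) := by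
  obtain ⟨i, hi, rfl⟩ := List.getElem_of_mem h
  have hj : (i + 1) % (4 * g) < (X.bdry f).length := by
    rw [S.len]; exact Nat.mod_lt _ (by omega)
  exact ⟨_, (infix_iff _ _ (S.len f) (by omega) _ _).2 ⟨i, _, hi, hj, rfl, rfl, rfl⟩⟩

theorem n3 (S : Surf X) (hg : 2 ≤ g) {f : X.F} {d' : X.D} (h : d' ∈ X.bdry f) :
    ∃ d, [d, d'] <:+: (X.bdry f ++ X.bdry f) := by
  obtain ⟨j, hj, rfl⟩ := List.getElem_of_mem h
  have hl := S.len f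
  by_cases h0 : j = 0
  · subst h0
    refine ⟨(X.bdry f)[4 * g - 1], (infix_iff _ _ (S.len f) (by omega) _ _).2
      ⟨4 * g - 1, 0, by omega, hj, ?_, rfl, rfl⟩⟩
    rw [Nat.sub_add_cancel (by omega), Nat.mod_self]
  · refine ⟨(X.bdry f)[j - 1], (infix_iff _ _ (S.len f) (by omega) _ _).2
      ⟨j - 1, j, by omega, hj, ?_, rfl, rfl⟩⟩
    rw [Nat.sub_add_cancel (by omega), Nat.mod_eq_of_lt (by omega)]

theorem uniq (S : Surf X) {f f' : X.F} {d : X.D} (h : d ∈ X.bdry f) (h' : d ∈ X.bdry f') : f = f' := by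
  obtain ⟨i, hi, hd⟩ := List.getElem_of_mem h
  obtain ⟨j, hj, hd'⟩ := List.getElem_of_mem h'
  have hl := S.len f
  have hl' := S.len f'
  have hij : i = j := by
    have h1 := S.lett f i hi
    have h2 := S.lett f' j hj
    rw [hd] at h1; rw [hd'] at h2
    rw [h1] at h2
    simp only [relLabel, relSign, Prod.mk.injEq, Fin.mk.injEq, decide_eq_decide] at h2
    omega
  subst hij
  have lets : ∀ k (hk : k < (X.bdry f).length) (hk' : k < (X.bdry f').length),
      X.dLet (X.bdry f)[k] = X.dLet (X.bdry f')[k] := by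
    intro k hk hk'; rw [S.lett, S.lett]
  have key : ∀ n, ∀ (hk : (i + n) % (4 * g) < (X.bdry f).length)
      (hk' : (i + n) % (4 * g) < (X.bdry f').length),
      (X.bdry f)[(i + n) % (4 * g)] = (X.bdry f')[(i + n) % (4 * g)] := by
    intro n
    induction n with
    | zero =>
      intro hk hk'
      have : (i + 0) % (4 * g) = i := by rw [Nat.add_zero, Nat.mod_eq_of_lt (by omega)]
      simp only [this]
      rw [hd, hd']
    | succ n ih =>
      intro hk hk'
      have hlt : (i + n) % (4 * g) < 4 * g := Nat.mod_lt _ (by omega)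
      have ih := ih (by omega) (by omega)
      apply S.tl _ _ _ (lets _ _ _)
      have e : (i + (n + 1)) % (4 * g) = ((i + n) % (4 * g) + 1) % (4 * g) := by
        simp [← add_assoc]
      rw [← S.adj_cyc f _ _ (by omega) hk e, ← S.adj_cyc f' _ _ (by omega) hk' e, ih]
  apply S.inj
  apply List.ext_getElem (by omega)
  intro k hk hk'
  have := key (4 * g - i + k)
  have e : (i + (4 * g - i + k)) % (4 * g) = k := by
    have : i + (4 * g - i + k) = k + 4 * g := by omega
    rw [this, Nat.add_mod_right, Nat.mod_eq_of_lt (by omega)]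
  simp only [e] at this
  exact this hk hk'

end Surf

/-! inner (boundary) darts -/

def InF (d : X.D) : Prop := ∃ f, d ∈ X.bdry f

def Inner (d : X.D) : Prop := InF d ∧ ¬ InF (X.dRev d)

/-- The properness hypotheses in usable form. -/
structure Proper (X : Complex g) : Prop extends Surf X where
  hg : 2 ≤ g
  conn : X.Connected
  edge : ∀ d : X.D, InF d ∨ InF (X.dRev d)
  vert : ∀ v : X.V, ∃ a m : ℕ, 1 ≤ m ∧ ∀ p,
    (∃ d : X.D, InF d ∧ X.dHead d = v ∧ posArr (X.dLet d) = p) ↔ ∃ i < m, p = (a + i) % (4 * g)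

theorem link (P : Proper X) {f : X.F} {e d : X.D} (he : e ∈ X.bdry f)
    (hd : X.dHead d = X.dHead e)
    (hp : posArr (X.dLet d) = (posArr (X.dLet e) + 1) % (4 * g)) : X.dRev d ∈ X.bdry f := by
  obtain ⟨e', h⟩ := P.toSurf.n2 P.hg he
  obtain ⟨-, h1, h2, h3⟩ := P.toSurf.n1 P.hg h
  have : X.dRev d = e' := by
    apply P.toSurf.pos
    · rw [dTail_dRev, hd, h2]
    · rw [← posArr_eq, hp, h3]
  rwa [this]

theorem dRev_inj {d d' : X.D} (h : X.dRev d = X.dRev d') : d = d' := by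
  rw [← dRev_dRev d, h, dRev_dRev]

theorem arr_inj (P : Proper X) {d d' : X.D} (h : X.dHead d = X.dHead d')
    (h' : posArr (X.dLet d) = posArr (X.dLet d')) : d = d' := by
  apply dRev_inj
  apply P.toSurf.pos
  · rw [dTail_dRev, dTail_dRev, h]
  · rw [← posArr_eq, ← posArr_eq, h']

theorem head_unique (P : Proper X) {d d' : X.D} (hd : Inner d) (hd' : Inner d')
    (h : X.dHead d = X.dHead d') : d = d' := by
  obtain ⟨a, m, hm, hv⟩ := P.vert (X.dHead d)
  have key : ∀ x : X.D, Inner x → X.dHead x = X.dHead d → posArr (X.dLet x) = a % (4 * g) := by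
    intro x hx hxv
    obtain ⟨i, hi, hp⟩ := (hv _).1 ⟨x, hx.1, hxv, rfl⟩
    cases i with
    | zero => exact hp
    | succ k =>
      exfalso
      obtain ⟨e, ⟨f, he⟩, hev, hep⟩ := (hv _).2 ⟨k, by omega, rfl⟩
      refine hx.2 ⟨f, link P he (hxv.trans hev.symm) ?_⟩
      rw [hp, hep]; simp [← add_assoc]
  exact arr_inj P h ((key d hd rfl).trans (key d' hd' h.symm).symm)

theorem tail_unique (P : Proper X) {d d' : X.D} (hd : Inner d) (hd' : Inner d')
    (h : X.dTail d = X.dTail d') : d = d' := by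
  obtain ⟨a, m, hm, hv⟩ := P.vert (X.dTail d)
  have key : ∀ x : X.D, Inner x → X.dTail x = X.dTail d →
      posLv (X.dLet x) = (a + m) % (4 * g) := by
    intro x hx hxv
    obtain ⟨f, hf⟩ := hx.1
    obtain ⟨e, hc⟩ := P.toSurf.n3 P.hg hf
    obtain ⟨h1, h2, h3, h4⟩ := P.toSurf.n1 P.hg hc
    obtain ⟨i, hi, hp⟩ := (hv _).1 ⟨e, ⟨f, h1⟩, h3.trans hxv, rfl⟩
    have e1 : posLv (X.dLet x) = (a + (i + 1)) % (4 * g) := by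
      rw [h4, hp]; simp [← add_assoc]
    by_cases hi' : i + 1 < m
    · exfalso
      obtain ⟨y, hy, hyv, hyp⟩ := (hv _).2 ⟨i + 1, hi', rfl⟩
      have : X.dRev y = x := by
        apply P.toSurf.pos
        · rw [dTail_dRev, hyv, hxv]
        · rw [← posArr_eq, hyp, e1]
      apply hx.2
      rwa [← this, dRev_dRev]
    · have : i + 1 = m := by omega
      rw [e1, this]
  exact P.toSurf.pos _ _ h ((key d hd rfl).trans (key d' hd' h.symm).symm)

/-! elementary cochains -/

open Classical in
def eps (d x : X.D) : ℤ := (if x = d then 1 else 0) - (if x = X.dRev d then 1 else 0)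

theorem eps_anti (d : X.D) : Anti (eps d) := by
  intro x
  have h1 : X.dRev x = d ↔ x = X.dRev d :=
    ⟨fun h => by rw [← h, dRev_dRev], fun h => by rw [h, dRev_dRev]⟩
  have h2 : X.dRev x = X.dRev d ↔ x = d := ⟨dRev_inj, fun h => by rw [h]⟩
  unfold eps
  split_ifs <;> first | (norm_num; done) | (exfalso; tauto)

open Classical in
theorem ev_eps (d : X.D) (l : List X.D) :
    ev (eps d) l = (l.count d : ℤ) - (l.count (X.dRev d) : ℤ) := by
  induction l with
  | nil => simp [ev]
  | cons x l ih =>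
    rw [ev_cons, ih, List.count_cons, List.count_cons]
    simp only [eps, beq_iff_eq]
    push_cast
    ring

open Classical in
theorem count_face (S : Surf X) {d : X.D} {f k : X.F} (h : d ∈ X.bdry f) :
    ((X.bdry k).count d : ℤ) = if k = f then 1 else 0 := by
  by_cases hk : k = f
  · subst hk
    rw [if_pos rfl, List.count_eq_one_of_mem (S.nodup k) h]; rfl
  · rw [if_neg hk, List.count_eq_zero_of_not_mem]; · rfl
    exact fun h' => hk (S.uniq h' h)

open Classical in
def RR (f f' : X.F) : Prop := ∃ ψ : X.D → ℤ, Anti ψ ∧ (∀ d, Inner d → ψ d = 0) ∧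
  ∀ k, ev ψ (X.bdry k) = (if k = f then 1 else 0) - (if k = f' then 1 else 0)

theorem ev_add (φ ψ : X.D → ℤ) (l : List X.D) : ev (fun d => φ d + ψ d) l = ev φ l + ev ψ l := by
  simp [ev, List.sum_map_add]

theorem ev_neg (φ : X.D → ℤ) (l : List X.D) : ev (fun d => - φ d) l = - ev φ l := by
  induction l with
  | nil => simp [ev]
  | cons x l ih => rw [ev_cons, ev_cons, ih]; ring

theorem rr_refl (f : X.F) : RR f f :=
  ⟨fun _ => 0, fun _ => by simp, fun _ _ => rfl, fun k => by simp [ev]⟩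

theorem rr_symm {f f' : X.F} (h : RR f f') : RR f' f := by
  obtain ⟨ψ, h1, h2, h3⟩ := h
  refine ⟨fun d => - ψ d, fun d => by simp [h1 d], fun d hd => by simp [h2 d hd], fun k => ?_⟩
  rw [ev_neg, h3]; ring

theorem rr_trans {f f' f'' : X.F} (h : RR f f') (h' : RR f' f'') : RR f f'' := by
  obtain ⟨ψ, h1, h2, h3⟩ := h
  obtain ⟨ψ', h1', h2', h3'⟩ := h'
  refine ⟨fun d => ψ d + ψ' d, fun d => ?_, fun d hd => by simp [h2 d hd, h2' d hd], fun k => ?_⟩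
  · simp only [h1 d, h1' d]; ring
  · rw [ev_add, h3, h3']; ring

theorem rr_edge (S : Surf X) {f f' : X.F} {d : X.D} (h : d ∈ X.bdry f)
    (h' : X.dRev d ∈ X.bdry f') : RR f f' := by
  classical
  refine ⟨eps d, eps_anti d, ?_, ?_⟩
  · intro x hx
    have e1 : x ≠ d := by rintro rfl; exact hx.2 ⟨f', h'⟩
    have e2 : x ≠ X.dRev d := by rintro rfl; exact hx.2 ⟨f, by rwa [dRev_dRev]⟩
    simp [eps, e1, e2]
  · intro k
    rw [ev_eps, count_face S h, count_face S h']

theorem rr_vert (P : Proper X) {f f' : X.F} {d d' : X.D} (h : d ∈ X.bdry f)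
    (h' : d' ∈ X.bdry f') (hd : X.dHead d = X.dHead d') : RR f f' := by
  obtain ⟨a, m, hm, hv⟩ := P.vert (X.dHead d)
  obtain ⟨d0, ⟨f0, h0⟩, h0v, h0p⟩ := (hv _).2 ⟨0, hm, rfl⟩
  have key : ∀ i, i < m → ∀ x f1, x ∈ X.bdry f1 → X.dHead x = X.dHead d →
      posArr (X.dLet x) = (a + i) % (4 * g) → RR f0 f1 := by
    intro i
    induction i with
    | zero =>
      intro _ x f1 hx hxv hxp
      have : x = d0 := arr_inj P (hxv.trans h0v.symm) (hxp.trans h0p.symm)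
      subst this
      rw [P.toSurf.uniq hx h0]; exact rr_refl _
    | succ i ih =>
      intro hi x f1 hx hxv hxp
      obtain ⟨e, ⟨f2, he⟩, hev, hep⟩ := (hv _).2 ⟨i, by omega, rfl⟩
      have h1 := ih (by omega) e f2 he hev hep
      have h2 : X.dRev x ∈ X.bdry f2 := by
        refine link P he (hxv.trans hev.symm) ?_
        rw [hxp, hep]; simp [← add_assoc]
      exact rr_trans h1 (rr_symm (rr_edge P.toSurf hx h2))
  obtain ⟨i, hi, hp⟩ := (hv _).1 ⟨d, ⟨f, h⟩, rfl, rfl⟩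
  obtain ⟨i', hi', hp'⟩ := (hv _).1 ⟨d', ⟨f', h'⟩, hd.symm, rfl⟩
  exact rr_trans (rr_symm (key i hi d f h rfl hp)) (key i' hi' d' f' h' hd.symm hp')

theorem rr_walk (P : Proper X) {u v : X.V} {l : List X.D} (hl : X.WalkFrom u v l) :
    ∀ f f' d d', d ∈ X.bdry f → d' ∈ X.bdry f' → X.dHead d = u → X.dHead d' = v → RR f f' := by
  induction hl with
  | nil v => intro f f' d d' h h' e e'; exact rr_vert P h h' (e.trans e'.symm)
  | @cons x v l hl ih =>
    intro f f' d d' h h' e e'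
    rcases P.edge x with ⟨k, hk⟩ | ⟨k, hk⟩
    · obtain ⟨y, hy⟩ := P.toSurf.n3 P.hg hk
      obtain ⟨h1, -, h3, -⟩ := P.toSurf.n1 P.hg hy
      exact rr_trans (rr_vert P h h1 (e.trans h3.symm)) (ih k f' x d' hk h' rfl e')
    · obtain ⟨y, hy⟩ := P.toSurf.n3 P.hg hk
      obtain ⟨h1, -, h3, -⟩ := P.toSurf.n1 P.hg hy
      rw [dTail_dRev] at h3
      exact rr_trans (rr_vert P h hk (e.trans (dHead_dRev x).symm)) (ih k f' y d' h1 h' h3 e')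

theorem rr_all (P : Proper X) {f f' : X.F} {d d' : X.D} (h : d ∈ X.bdry f)
    (h' : d' ∈ X.bdry f') : RR f f' := by
  obtain ⟨l, hl⟩ := P.conn.2 (X.dHead d) (X.dHead d')
  exact rr_walk P hl f f' d d' h h' rfl rfl

open Classical in
theorem cocyc (P : Proper X) {d d' : X.D} (h : Inner d) (h' : Inner d') :
    ∃ φ : X.D → ℤ, Anti φ ∧ (∀ f, ev φ (X.bdry f) = 0) ∧
      ∀ c, (∀ x ∈ c, Inner x) → ev φ c = (c.count d : ℤ) - (c.count d' : ℤ) := by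
  obtain ⟨f, hf⟩ := h.1
  obtain ⟨f', hf'⟩ := h'.1
  obtain ⟨ψ, h1, h2, h3⟩ := rr_all P hf' hf
  have out : ∀ x : X.D, Inner x → ∀ c : List X.D, (∀ y ∈ c, InF y) → c.count (X.dRev x) = 0 :=
    fun x hx c hc => List.count_eq_zero_of_not_mem fun hm => hx.2 (hc _ hm)
  refine ⟨fun x => eps d x + (- eps d' x + ψ x), ?_, ?_, ?_⟩
  · intro x
    simp only [eps_anti d x, eps_anti d' x, h1 x]; ring
  · intro k
    rw [ev_add, ev_add, ev_neg, h3, ev_eps, ev_eps, out d h _ fun y hy => ⟨k, hy⟩,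
      out d' h' _ fun y hy => ⟨k, hy⟩, count_face P.toSurf hf, count_face P.toSurf hf']
    push_cast; ring
  · intro c hc
    have h0 : ev ψ c = 0 := by
      clear h3
      induction c with
      | nil => rfl
      | cons x c ih =>
        rw [ev_cons, h2 x (hc x (by simp)), ih fun y hy => hc y (by simp [hy])]; rfl
    rw [ev_add, ev_add, ev_neg, h0, ev_eps, ev_eps, out d h _ fun y hy => (hc y hy).1,
      out d' h' _ fun y hy => (hc y hy).1]
    push_cast; ring

/-! boundary circles -/

def IC (v : X.V) (c : List X.D) : Prop := c ≠ [] ∧ X.WalkFrom v v c ∧ ∀ d ∈ c, Inner d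

def Prim (d : X.D) (δ : List X.D) : Prop := IC (X.dTail d) δ ∧ (∃ t, δ = d :: t) ∧
  ∀ c, IC (X.dTail d) c → δ.length ≤ c.length

theorem prim_exists (P : Proper X) {v : X.V} {c : List X.D} (h : IC v c) :
    ∃ d δ, Prim d δ ∧ d ∈ c := by
  classical
  cases c with
  | nil => exact absurd rfl h.1
  | cons d c =>
    have hv := (walk_cons_iff.1 h.2.1).1
    subst hv
    have hex : ∃ n, ∃ δ, IC (X.dTail d) δ ∧ δ.length = n := ⟨_, _, h, rfl⟩
    obtain ⟨δ, hδ, hn⟩ := Nat.find_spec hex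
    refine ⟨d, δ, ⟨hδ, ?_, ?_⟩, by simp⟩
    · cases δ with
      | nil => exact absurd rfl hδ.1
      | cons x t =>
        have := (walk_cons_iff.1 hδ.2.1).1
        have e := tail_unique P (hδ.2.2 x (by simp)) (h.2.2 d (by simp)) this
        exact ⟨t, by rw [e]⟩
    · intro c' hc'
      rw [hn]; exact Nat.find_min' hex ⟨c', hc', rfl⟩

theorem det (P : Proper X) {a b : List X.D} {u v w : X.V} (ha : X.WalkFrom u v a)
    (hb : X.WalkFrom u w b) (ia : ∀ d ∈ a, Inner d) (ib : ∀ d ∈ b, Inner d)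
    (hl : a.length ≤ b.length) : ∃ b', b = a ++ b' := by
  induction a generalizing b u with
  | nil => exact ⟨b, rfl⟩
  | cons x a ih =>
    cases b with
    | nil => simp at hl
    | cons y b =>
      rw [walk_cons_iff] at ha hb
      have e := tail_unique P (ia x (by simp)) (ib y (by simp)) (ha.1.trans hb.1.symm)
      subst e
      obtain ⟨b', rfl⟩ := ih ha.2 hb.2 (fun d hd => ia d (by simp [hd]))
        (fun d hd => ib d (by simp [hd])) (by simpa using hl)
      exact ⟨b', rfl⟩

theorem walk_end {u v v' : X.V} {l : List X.D} (h : X.WalkFrom u v l)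
    (h' : X.WalkFrom u v' l) : v = v' := by
  induction l generalizing u with
  | nil => rw [walk_nil_iff] at h h'; rw [← h, h']
  | cons d l ih => rw [walk_cons_iff] at h h'; exact ih h.2 h'.2

theorem prim_pow (P : Proper X) {d : X.D} {δ : List X.D} (hδ : Prim d δ) :
    ∀ (n : ℕ) (c : List X.D), c.length ≤ n → X.WalkFrom (X.dTail d) (X.dTail d) c →
      (∀ x ∈ c, Inner x) → ∃ k, c = pw k δ := by
  intro n
  induction n with
  | zero =>
    intro c hn hc ic
    have : c = [] := List.eq_nil_of_length_eq_zero (by omega)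
    exact ⟨0, by rw [this, pw_zero]⟩
  | succ n ih =>
    intro c hn hc ic
    by_cases h0 : c = []
    · exact ⟨0, by rw [h0, pw_zero]⟩
    · obtain ⟨c', rfl⟩ := det P hδ.1.2.1 hc hδ.1.2.2 ic (hδ.2.2 c ⟨h0, hc, ic⟩)
      obtain ⟨w, h1, h2⟩ := walk_append_iff.1 hc
      have := walk_end h1 hδ.1.2.1
      subst this
      obtain ⟨t, ht⟩ := hδ.2.1
      have hlen : 0 < δ.length := by rw [ht]; simp
      obtain ⟨k, rfl⟩ := ih c' (by rw [List.length_append] at hn; omega) h2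
        fun x hx => ic x (by simp [hx])
      exact ⟨k + 1, by rw [pw_succ]⟩

theorem prim_rot (P : Proper X) {d : X.D} {δ c : List X.D} {v : X.V} (hδ : Prim d δ)
    (hc : IC v c) (hd : d ∈ c) : ∃ k a b, c = a ++ b ∧ b ++ a = pw k δ ∧
      X.WalkFrom v (X.dTail d) a ∧ X.WalkFrom (X.dTail d) v b := by
  obtain ⟨a, t, rfl⟩ := List.append_of_mem hd
  obtain ⟨w, h1, h2⟩ := walk_append_iff.1 hc.2.1
  have := (walk_cons_iff.1 h2).1
  subst this
  obtain ⟨k, hk⟩ := prim_pow P hδ _ (d :: t ++ a) le_rfl (walk_app h2 h1) (by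
    intro x hx
    apply hc.2.2 x
    simp only [List.mem_append, List.mem_cons] at hx ⊢
    tauto)
  exact ⟨k, a, d :: t, rfl, hk, h1, h2⟩

theorem prim_fh (P : Proper X) {d : X.D} {δ c : List X.D} {v : X.V} (hδ : Prim d δ)
    (hc : IC v c) (hd : d ∈ c) : ∃ k, FH v c (X.dTail d) (pw k δ) ∧
      FH v (X.revW c) (X.dTail d) (pw k (X.revW δ)) := by
  obtain ⟨k, a, b, rfl, h1, h2, h3⟩ := prim_rot P hδ hc hd
  refine ⟨k, ?_, ?_⟩
  · rw [← h1]; exact fh_rot h2 h3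
  · rw [← pw_rev, ← h1, revW_append, revW_append]; exact fh_rot (walk_rev h3) (walk_rev h2)

theorem mem_pw {k : ℕ} {δ : List X.D} {x : X.D} (h : x ∈ pw k δ) : x ∈ δ := by
  simp only [pw, List.mem_flatten, List.mem_replicate] at h
  obtain ⟨l, ⟨-, rfl⟩, h⟩ := h
  exact h

theorem not_both (P : Proper X) {d d' : X.D} {δ c : List X.D} {v : X.V} (hδ : Prim d δ)
    (hd' : d' ∉ δ) (hc : IC v c) (hd : d ∈ c) : d' ∉ c := by
  obtain ⟨k, a, b, rfl, h1, -, -⟩ := prim_rot P hδ hc hd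
  intro h
  apply hd'
  apply mem_pw (k := k)
  rw [← h1]
  simp only [List.mem_append] at h ⊢
  tauto

open Classical in
theorem prim_count {d : X.D} {δ : List X.D} (hδ : Prim d δ) : δ.count d = 1 := by
  obtain ⟨h1, ⟨t, rfl⟩, h3⟩ := hδ
  have : d ∉ t := by
    intro h
    obtain ⟨a, b, rfl⟩ := List.append_of_mem h
    obtain ⟨-, hw, hi⟩ := h1
    have hw' : X.WalkFrom (X.dTail d) (X.dTail d) ((d :: a) ++ d :: b) := hw
    obtain ⟨w, h4, h5⟩ := walk_append_iff.1 hw'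
    have := (walk_cons_iff.1 h5).1
    subst this
    have := h3 (d :: a) ⟨by simp, h4, fun x hx => hi x (by
      simp only [List.mem_append, List.mem_cons] at hx ⊢; tauto)⟩
    simp at this
  rw [List.count_cons_self, List.count_eq_zero_of_not_mem this]

theorem prim_inner {d : X.D} {δ : List X.D} (hδ : Prim d δ) : Inner d := by
  obtain ⟨t, ht⟩ := hδ.2.1
  exact hδ.1.2.2 d (by rw [ht]; simp)

theorem prim_mem {d : X.D} {δ : List X.D} (hδ : Prim d δ) : d ∈ δ := by
  obtain ⟨t, ht⟩ := hδ.2.1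
  rw [ht]; simp

/-! main argument -/

theorem one_side (P : Proper X) {l : List X.D} {u v : X.V} (hl : X.WalkFrom u v l)
    (hb : ∀ d ∈ l, ¬ (InF d ∧ InF (X.dRev d)))
    (hr : ∀ l₁ d l₂, l ≠ l₁ ++ d :: X.dRev d :: l₂) :
    (∀ d ∈ l, Inner d) ∨ (∀ d ∈ l, Inner (X.dRev d)) := by
  have cs : ∀ d : X.D, ¬ (InF d ∧ InF (X.dRev d)) → Inner d ∨ Inner (X.dRev d) := by
    intro d hd
    rcases P.edge d with h | h
    · exact Or.inl ⟨h, fun h' => hd ⟨h, h'⟩⟩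
    · exact Or.inr ⟨h, fun h' => hd ⟨by rwa [dRev_dRev] at h', h⟩⟩
  induction hl with
  | nil => simp
  | @cons x v l hl ih =>
    have ih := ih (fun d hd => hb d (by simp [hd])) (by
      rintro l₁ d l₂ rfl
      exact hr (x :: l₁) d l₂ rfl)
    have hx := cs x (hb x (by simp))
    cases l with
    | nil => simpa using hx
    | cons y l =>
      have hxy : X.dHead x = X.dTail y := (walk_cons_iff.1 hl).1.symm
      have hne : y ≠ X.dRev x := by
        rintro rfl; exact hr [] x l rfl
      rcases ih with ih | ih
      · left
        have hy := ih y (by simp)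
        rcases hx with hx | hx
        · intro d hd
          rcases List.mem_cons.1 hd with rfl | hd
          · exact hx
          · exact ih d hd
        · exact absurd (tail_unique P hy hx (by rw [dTail_dRev, hxy])) hne
      · right
        have hy := ih y (by simp)
        rcases hx with hx | hx
        · have := head_unique P hx hy (by rw [dHead_dRev, hxy])
          exact absurd (by rw [this, dRev_dRev]) hne
        · intro d hd
          rcases List.mem_cons.1 hd with rfl | hd
          · exact hx
          · exact ih d hd

def Good (X : Complex g) : Prop := ∃ c : List X.D, X.IsCycle c ∧
  X.ShortestRep Set.univ Set.univ c ∧ ∃ d ∈ c, InF d ∧ InF (X.dRev d)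

theorem alt (P : Proper X) (hbad : ¬ Good X) {v : X.V} {l : List X.D} (hl : X.WalkFrom v v l) :
    (∃ w, FH v l w []) ∨ ∃ w c, IC w c ∧ (FH v l w c ∨ FH v l w (X.revW c)) := by
  classical
  have hex : ∃ n, ∃ w c, FH v l w c ∧ c.length = n := ⟨_, _, _, fh_refl hl, rfl⟩
  obtain ⟨w, c, hc, hn⟩ := Nat.find_spec hex
  have hmin : ∀ w' c', FH v l w' c' → c.length ≤ c'.length := by
    intro w' c' h'; rw [hn]; exact Nat.find_min' hex ⟨w', c', h', rfl⟩
  by_cases h0 : c = []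
  · subst h0; exact Or.inl ⟨w, hc⟩
  right
  have hcw := hc.2.1
  have hsh : X.ShortestRep Set.univ Set.univ c := by
    rintro c' ⟨u, v', q, h1, h2, h3, -, -, -, h4⟩
    have := walk_unique h0 h1 hcw
    subst this
    exact hmin v' c' (hc.trans ⟨h1, h2, q, h3, by simpa [Hm] using h4⟩)
  have hb : ∀ d ∈ c, ¬ (InF d ∧ InF (X.dRev d)) := by
    intro d hd h
    exact hbad ⟨c, ⟨h0, w, hcw⟩, hsh, d, hd, h⟩
  have hr : ∀ l₁ d l₂, c ≠ l₁ ++ d :: X.dRev d :: l₂ := by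
    rintro l₁ d l₂ rfl
    obtain ⟨y, h1, h2⟩ := walk_append_iff.1 hcw
    rw [walk_cons_iff, walk_cons_iff, dHead_dRev] at h2
    obtain ⟨rfl, -, h2⟩ := h2
    have := hmin _ _ (hc.trans (fh_of_hm hcw (walk_app h1 h2) (hm_back d h1 h2 rfl)))
    simp at this
  rcases one_side P hcw hb hr with h | h
  · exact ⟨w, c, ⟨h0, hcw, h⟩, Or.inl hc⟩
  · refine ⟨w, X.revW c, ⟨?_, walk_rev hcw, ?_⟩, Or.inr (by rwa [revW_revW])⟩
    · intro h'; apply h0; rw [← revW_revW c, h']; rfl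
    · intro d hd
      rw [mem_revW] at hd
      have := h _ hd
      rwa [dRev_dRev] at this

/-- All loops are powers of `δ` as soon as all inner cycles are. -/
theorem cyc_of (P : Proper X) (hbad : ¬ Good X) (c₀ : List X.D)
    (h : ∀ v c, IC v c → ∃ w k, (FH v c w (pw k c₀) ∧ FH v (X.revW c) w (pw k (X.revW c₀))) ∨
      (FH v c w (pw k (X.revW c₀)) ∧ FH v (X.revW c) w (pw k c₀))) : CyclicPi1 X := by
  refine ⟨c₀, fun v l hl => ?_⟩
  rcases alt P hbad hl with ⟨w, hw⟩ | ⟨w, c, hc, hlc⟩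
  · exact ⟨0, Or.inl (by simpa using hw.toFree)⟩
  · obtain ⟨w', k, h1 | h1⟩ := h w c hc
    · rcases hlc with h2 | h2
      · exact ⟨k, Or.inl (h2.trans h1.1).toFree⟩
      · exact ⟨k, Or.inr (h2.trans h1.2).toFree⟩
    · rcases hlc with h2 | h2
      · exact ⟨k, Or.inr (h2.trans h1.1).toFree⟩
      · exact ⟨k, Or.inl (h2.trans h1.2).toFree⟩

open Classical in
/-- An inner cycle (up to orientation) with nonzero pairing meets `d` or `d'`. -/
theorem meets {d d' : X.D} {φ : X.D → ℤ} (hφ : Anti φ) (hc : ∀ f, ev φ (X.bdry f) = 0)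
    (hi : ∀ c, (∀ x ∈ c, Inner x) → ev φ c = (c.count d : ℤ) - (c.count d' : ℤ))
    {v w : X.V} {β c : List X.D} (h : IC w c) (hb : FH v β w c ∨ FH v β w (X.revW c))
    (hne : ev φ β ≠ 0) : d ∈ c ∨ d' ∈ c := by
  by_contra hno
  push Not at hno
  have h0 : ev φ c = 0 := by
    rw [hi c h.2.2, List.count_eq_zero_of_not_mem hno.1, List.count_eq_zero_of_not_mem hno.2]; rfl
  rcases hb with hb | hb
  · exact hne (by rw [ev_fh hφ hc hb, h0])
  · exact hne (by rw [ev_fh hφ hc hb, ev_rev hφ, h0, neg_zero])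

theorem cyclic (P : Proper X) (hbad : ¬ Good X) : CyclicPi1 X := by
  classical
  by_cases hex : ∃ v c, IC (X := X) v c
  swap
  · exact cyc_of P hbad [] fun v c hc => absurd ⟨v, c, hc⟩ hex
  obtain ⟨v1, c1, hc1⟩ := hex
  obtain ⟨d1, δ1, p1, -⟩ := prim_exists P hc1
  by_cases hex2 : ∃ v c, IC (X := X) v c ∧ d1 ∉ c
  swap
  · push Not at hex2
    refine cyc_of P hbad δ1 fun v c hc => ?_
    obtain ⟨k, hk⟩ := prim_fh P p1 hc (hex2 v c hc)
    exact ⟨_, k, Or.inl hk⟩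
  obtain ⟨v2, c2, hc2, hd12⟩ := hex2
  obtain ⟨d2, δ2, p2, hm2⟩ := prim_exists P hc2
  have n21 : d2 ∉ δ1 := by
    -- otherwise `d1 ∈ c2`
    intro h
    obtain ⟨k, a, b, e1, e2, -, -⟩ := prim_rot P p2 p1.1 h
    have h1 : d1 ∈ δ2 := by
      apply mem_pw (k := k)
      rw [← e2]
      have := prim_mem p1
      rw [e1] at this
      simp only [List.mem_append] at this ⊢
      tauto
    obtain ⟨k', a', b', e1', e2', -, -⟩ := prim_rot P p2 hc2 hm2
    have hk' : k' ≠ 0 := by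
      rintro rfl
      rw [pw_zero, List.append_eq_nil_iff] at e2'
      exact hc2.1 (by rw [e1', e2'.1, e2'.2]; rfl)
    obtain ⟨j, rfl⟩ := Nat.exists_eq_succ_of_ne_zero hk'
    apply hd12
    have : d1 ∈ b' ++ a' := by rw [e2', pw_succ]; simp [h1]
    rw [e1']
    simp only [List.mem_append] at this ⊢
    tauto
  have n12 : d1 ∉ δ2 := fun h => not_both P p1 n21 p2.1 h (prim_mem p2)
  have i1 := p1.1.2.2
  have i2 := p2.1.2.2
  have w1 := p1.1.2.1
  have w2 := p2.1.2.1
  obtain ⟨q, hq⟩ := P.conn.2 (X.dTail d1) (X.dTail d2)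
  obtain ⟨φ, f1, f2, f3⟩ := cocyc P (prim_inner p1) (prim_inner p2)
  have φ1 : ev φ δ1 = 1 := by
    rw [f3 _ i1, prim_count p1, List.count_eq_zero_of_not_mem n21]; rfl
  have φ2 : ev φ δ2 = -1 := by
    rw [f3 _ i2, prim_count p2, List.count_eq_zero_of_not_mem n12]; rfl
  by_cases hex3 : ∃ v c, IC (X := X) v c ∧ d1 ∉ c ∧ d2 ∉ c
  · exfalso
    obtain ⟨v3, c3, hc3, hd13, hd23⟩ := hex3
    obtain ⟨d3, δ3, p3, hm3⟩ := prim_exists P hc3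
    have n31 : d3 ∉ δ1 := by
      intro h
      have h1 : d1 ∉ δ3 := fun h1 => by
        obtain ⟨k', a', b', e1', e2', -, -⟩ := prim_rot P p3 hc3 hm3
        have hk' : k' ≠ 0 := by
          rintro rfl
          rw [pw_zero, List.append_eq_nil_iff] at e2'
          exact hc3.1 (by rw [e1', e2'.1, e2'.2]; rfl)
        obtain ⟨j, rfl⟩ := Nat.exists_eq_succ_of_ne_zero hk'
        apply hd13
        have : d1 ∈ b' ++ a' := by rw [e2', pw_succ]; simp [h1]
        rw [e1']
        simp only [List.mem_append] at this ⊢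
        tauto
      exact not_both P p3 h1 p1.1 h (prim_mem p1)
    have n32 : d3 ∉ δ2 := by
      intro h
      have h1 : d2 ∉ δ3 := fun h1 => by
        obtain ⟨k', a', b', e1', e2', -, -⟩ := prim_rot P p3 hc3 hm3
        have hk' : k' ≠ 0 := by
          rintro rfl
          rw [pw_zero, List.append_eq_nil_iff] at e2'
          exact hc3.1 (by rw [e1', e2'.1, e2'.2]; rfl)
        obtain ⟨j, rfl⟩ := Nat.exists_eq_succ_of_ne_zero hk'
        apply hd23
        have : d2 ∈ b' ++ a' := by rw [e2', pw_succ]; simp [h1]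
        rw [e1']
        simp only [List.mem_append] at this ⊢
        tauto
      exact not_both P p3 h1 p2.1 h (prim_mem p2)
    obtain ⟨φ', f1', f2', f3'⟩ := cocyc P (prim_inner p1) (prim_inner p3)
    obtain ⟨φ'', f1'', f2'', f3''⟩ := cocyc P (prim_inner p2) (prim_inner p3)
    have e1 : ev φ' δ1 = 1 := by
      rw [f3' _ i1, prim_count p1, List.count_eq_zero_of_not_mem n31]; rfl
    have e2 : ev φ' δ2 = 0 := by
      rw [f3' _ i2, List.count_eq_zero_of_not_mem n12, List.count_eq_zero_of_not_mem n32]; rfl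
    have e3 : ev φ'' δ1 = 0 := by
      rw [f3'' _ i1, List.count_eq_zero_of_not_mem n21, List.count_eq_zero_of_not_mem n31]; rfl
    have e4 : ev φ'' δ2 = 1 := by
      rw [f3'' _ i2, prim_count p2, List.count_eq_zero_of_not_mem n32]; rfl
    have hβ : X.WalkFrom _ _ (δ1 ++ (q ++ (δ2 ++ (δ2 ++ X.revW q)))) :=
      walk_app w1 (walk_app hq (walk_app w2 (walk_app w2 (walk_rev hq))))
    have z1 : ev φ (δ1 ++ (q ++ (δ2 ++ (δ2 ++ X.revW q)))) ≠ 0 := by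
      simp only [ev_append, ev_rev f1, φ1, φ2]; omega
    have z2 : ev φ' (δ1 ++ (q ++ (δ2 ++ (δ2 ++ X.revW q)))) ≠ 0 := by
      simp only [ev_append, ev_rev f1', e1, e2]; omega
    have z3 : ev φ'' (δ1 ++ (q ++ (δ2 ++ (δ2 ++ X.revW q)))) ≠ 0 := by
      simp only [ev_append, ev_rev f1'', e3, e4]; omega
    rcases alt P hbad hβ with ⟨w, hw⟩ | ⟨w, c, hc, hlc⟩
    · exact z1 (ev_fh f1 f2 hw)
    · have m1 := meets f1 f2 f3 hc hlc z1
      have m2 := meets f1' f2' f3' hc hlc z2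
      have m3 := meets f1'' f2'' f3'' hc hlc z3
      have x12 : d1 ∈ c → d2 ∉ c := not_both P p1 n21 hc
      have x13 : d1 ∈ c → d3 ∉ c := not_both P p1 n31 hc
      have x23 : d2 ∈ c → d3 ∉ c := not_both P p2 n32 hc
      tauto
  · push Not at hex3
    have hβ : X.WalkFrom _ _ (δ1 ++ (q ++ (δ2 ++ X.revW q))) :=
      walk_app w1 (walk_app hq (walk_app w2 (walk_rev hq)))
    have z : ev φ (δ1 ++ (q ++ (δ2 ++ X.revW q))) = 0 := by
      simp only [ev_append, ev_rev f1, φ1, φ2]; ring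
    have hnull : Hm (X.dTail d1) (X.dTail d1) (δ1 ++ (q ++ (δ2 ++ X.revW q))) [] := by
      rcases alt P hbad hβ with ⟨w, -, -, r, hr, h⟩ | ⟨w, c, hc, hlc⟩
      · exact h.trans (hm_cancel hr)
      · exfalso
        have h0 : ev φ c = 0 := by
          rcases hlc with h | h
          · rw [← ev_fh f1 f2 h, z]
          · have := ev_fh f1 f2 h
            rw [z, ev_rev f1] at this
            omega
        rw [f3 c hc.2.2] at h0
        by_cases hd : d1 ∈ c
        · have := not_both P p1 n21 hc hd
          rw [List.count_eq_zero_of_not_mem this] at h0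
          have := List.count_pos_iff.2 hd
          omega
        · have h2 := hex3 w c hc hd
          rw [List.count_eq_zero_of_not_mem hd] at h0
          have := List.count_pos_iff.2 h2
          omega
    have A : FH (X.dTail d1) (X.revW δ1) (X.dTail d2) δ2 := by
      refine ⟨walk_rev w1, w2, q, hq, ?_⟩
      have h1 := hm_ctx (walk_rev w1) (.nil _) hnull
      have h2 := hm_mid' (.nil _) w1 (walk_app hq (walk_app w2 (walk_rev hq)))
      simp only [List.nil_append, List.append_nil, List.append_assoc] at h1 h2
      exact h1.symm.trans h2
    have B : FH (X.dTail d1) δ1 (X.dTail d2) (X.revW δ2) := by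
      refine ⟨w1, walk_rev w2, q, hq, ?_⟩
      have w3 := walk_app hq (walk_app w2 (walk_rev hq))
      have h1 := hm_ctx (.nil _) (walk_rev w3) hnull
      have h2 := hm_mid w1 w3 (.nil _)
      simp only [List.nil_append, List.append_nil, List.append_assoc, revW_append, revW_revW] at h1 h2
      exact h2.symm.trans h1
    refine cyc_of P hbad δ1 fun v c hc => ?_
    by_cases hd : d1 ∈ c
    · obtain ⟨k, hk⟩ := prim_fh P p1 hc hd
      exact ⟨_, k, Or.inl hk⟩
    · obtain ⟨k, hk1, hk2⟩ := prim_fh P p2 hc (hex3 v c hc hd)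
      exact ⟨_, k, Or.inr ⟨hk1.trans (A.pw k).symm, hk2.trans (B.pw k).symm⟩⟩

end S10

/-- Let `X` be a connected tiled surface which is a proper
surface (every edge is incident with one or two `4g`-gons, and the `4g`-gon
corners around each vertex form a single nonempty consecutive sequence of length
`m`, `1 ≤ m ≤ 4g`).  If `X` has genus `≥ 1` or at least `3` boundary components
and punctures in total — for a connected surface this is *equivalent* to `π₁(X)`
being non-cyclic, which is how we render it — then `X^(1)` contains a cycle, not
contained in `∂X`, which is cyclically shortest in its free homotopy class. -/
theorem statement_10 (g : ℕ) (hg : 2 ≤ g) (X : Complex g) (hX : X.IsTiledSurface)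
    (hconn : X.Connected)
    (hpe : ∀ e : X.E, {p : X.F × Bool | (e, p.2) ∈ X.bdry p.1}.Nonempty ∧
      ∃ p q : X.F × Bool, {p' : X.F × Bool | (e, p'.2) ∈ X.bdry p'.1} ⊆ {p, q})
    (hpv : ∀ v : X.V, ∃ a m : ℕ, 1 ≤ m ∧ m ≤ 4 * g ∧
      {p : ℕ | ∃ (f : X.F) (d d' : X.D), [d, d'] <:+: (X.bdry f ++ X.bdry f) ∧
          X.dHead d = v ∧ posArr (X.dLet d) = p} =
        {p : ℕ | ∃ i < m, p = (a + i) % (4 * g)})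
    (hbig : ¬ CyclicPi1 X) :
    ∃ c : List X.D, X.IsCycle c ∧ X.ShortestRep Set.univ Set.univ c ∧
      ∃ d ∈ c, ∃ p q : X.F × Bool, p ≠ q ∧
        (d.1, p.2) ∈ X.bdry p.1 ∧ (d.1, q.2) ∈ X.bdry q.1 := by
  by_contra hno
  have S := S10.surf_of_tiled hg hX
  have P : S10.Proper X := by
    refine { S with hg := hg, conn := hconn, edge := ?_, vert := ?_ }
    · rintro ⟨e, b⟩
      obtain ⟨⟨f, b'⟩, h⟩ := (hpe e).1
      simp only [Set.mem_setOf_eq] at h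
      by_cases hb : b' = b
      · subst hb; exact Or.inl ⟨f, h⟩
      · have : b' = !b := by cases b <;> cases b' <;> simp_all
        subst this; exact Or.inr ⟨f, h⟩
    · intro v
      obtain ⟨a, m, hm, -, hs⟩ := hpv v
      refine ⟨a, m, hm, fun p => ?_⟩
      have h1 := Set.ext_iff.1 hs p
      simp only [Set.mem_setOf_eq] at h1
      rw [← h1]
      constructor
      · rintro ⟨d, ⟨f, hf⟩, h2, h3⟩
        obtain ⟨d', hd'⟩ := S.n2 hg hf
        exact ⟨f, d, d', hd', h2, h3⟩
      · rintro ⟨f, d, d', hd, h2, h3⟩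
        exact ⟨d, ⟨f, (S.n1 hg hd).1⟩, h2, h3⟩
  refine hbig (S10.cyclic P ?_)
  rintro ⟨c, hc, hs, d, hd, ⟨f, hf⟩, ⟨f', hf'⟩⟩
  refine hno ⟨c, hc, hs, d, hd, (f, d.2), (f', !d.2), ?_, hf, hf'⟩
  intro h
  have := congrArg Prod.snd h
  simp at this

end CS

end
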